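/- arXiv:1509.07422 — 9 statements merged into one kernel-verified Lean document; each statement's English description precedes it below -/
import Mathlib

section
/- Let H be a real Hilbert space, let f, g : H → ℝ be differentiable with f m-strongly convex for some m > 0, and let x_f and x_g be minimizers of f and g respectively (so ∇f(x_f) = 0 and ∇g(x_g) = 0). Then ‖x_f − x_g‖ ≤ (1/m)‖∇f(x_g) − ∇g(x_g)‖. -/
open MeasureTheory
open scoped RealInnerProductSpace

/-- `φ` is an `m`-strong subgradient of `f` at `x`: the affine function with slope `φ` touching `f`
at `x`, plus `m / 2` times the squared distance to `x`, minorizes `f` everywhere. A differentiable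
function is `m`-strongly convex when its derivative at every point is such a `φ`. Subgradients are
taken in the dual space, so that no inner product is required. -/
def IsStrongSubgradientAt {E : Type*} [SeminormedAddCommGroup E] [NormedSpace ℝ E]
    (m : ℝ) (f : E → ℝ) (φ : StrongDual ℝ E) (x : E) : Prop :=
  ∀ y, f x + φ (y - x) + m / 2 * ‖y - x‖ ^ 2 ≤ f y

namespace IsStrongSubgradientAt

variable {E : Type*} [SeminormedAddCommGroup E] [NormedSpace ℝ E]
  {m : ℝ} {f : E → ℝ} {φ ψ : StrongDual ℝ E} {x y : E}

theorem mul_norm_sub_sq_le_sub_apply (hφ : IsStrongSubgradientAt m f φ x)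
    (hψ : IsStrongSubgradientAt m f ψ y) : m * ‖x - y‖ ^ 2 ≤ (φ - ψ) (x - y) := by
  have below_at_y : f x - φ (x - y) + m / 2 * ‖x - y‖ ^ 2 ≤ f y := by
    simpa only [← neg_sub x y, map_neg, norm_neg, ← sub_eq_add_neg] using hφ y
  have below_at_x : f y + ψ (x - y) + m / 2 * ‖x - y‖ ^ 2 ≤ f x := hψ x
  rw [sub_apply]
  linarith

theorem mul_norm_sub_le_norm_sub (hφ : IsStrongSubgradientAt m f φ x)
    (hψ : IsStrongSubgradientAt m f ψ y) : m * ‖x - y‖ ≤ ‖φ - ψ‖ := by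
  rcases (norm_nonneg (x - y)).eq_or_lt with dist_zero | dist_pos
  · rw [← dist_zero, mul_zero]
    exact norm_nonneg _
  · refine le_of_mul_le_mul_right ?_ dist_pos
    calc
      m * ‖x - y‖ * ‖x - y‖ = m * ‖x - y‖ ^ 2 := by ring
      _ ≤ (φ - ψ) (x - y) := hφ.mul_norm_sub_sq_le_sub_apply hψ
      _ ≤ ‖φ - ψ‖ * ‖x - y‖ := (le_abs_self _).trans ((φ - ψ).le_opNorm _)

end IsStrongSubgradientAt

theorem strong_convexity_minimizer_perturbation_general
    {E : Type*} [NormedAddCommGroup E] [NormedSpace ℝ E]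
    {f g : E → ℝ} {f' g' : StrongDual ℝ E} {m : ℝ} {xf xg : E} (hm : 0 < m)
    (hxf : IsStrongSubgradientAt m f 0 xf) (hf' : IsStrongSubgradientAt m f f' xg)
    (hxg : IsLocalMin g xg) (hg' : HasFDerivAt g g' xg) :
    ‖xf - xg‖ ≤ (1 / m) * ‖f' - g'‖ := by
  have expansion : m * ‖xf - xg‖ ≤ ‖f'‖ := by
    simpa only [zero_sub, norm_neg] using hxf.mul_norm_sub_le_norm_sub hf'
  rw [hxg.hasFDerivAt_eq_zero hg', sub_zero, one_div_mul_eq_div]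
  exact (le_div_iff₀' hm).2 expansion

/-- If `f` is `m`-strongly convex and `g` is differentiable, with respective
minimizers `x_f` and `x_g` (so the gradients vanish there), then
`‖x_f - x_g‖ ≤ (1/m) ‖∇f(x_g) - ∇g(x_g)‖`. -/
theorem strong_convexity_minimizer_perturbation
    {H : Type*} [NormedAddCommGroup H] [InnerProductSpace ℝ H] [CompleteSpace H]
    (f g : H → ℝ) (m : ℝ) (hm : 0 < m)
    (hfdiff : Differentiable ℝ f) (hgdiff : Differentiable ℝ g)
    (hconv : ∀ x y : H, f x + ⟪gradient f x, y - x⟫ + m / 2 * ‖y - x‖ ^ 2 ≤ f y)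
    (xf xg : H)
    (hxf : ∀ y : H, f xf ≤ f y) (hxg : ∀ y : H, g xg ≤ g y)
    (hgradf : gradient f xf = 0) (hgradg : gradient g xg = 0) :
    ‖xf - xg‖ ≤ (1 / m) * ‖gradient f xg - gradient g xg‖ := by
  have hsub (x : H) : IsStrongSubgradientAt m f (InnerProductSpace.toDual ℝ H (gradient f x)) x :=
    hconv x
  have hzero : IsStrongSubgradientAt m f 0 xf := by simpa only [hgradf, map_zero] using hsub xf
  simpa only [← map_sub, LinearIsometryEquiv.norm_map] using
    strong_convexity_minimizer_perturbation_general hm hzero (hsub xg) (.of_forall hxg)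
      (hgdiff xg).hasGradientAt.hasFDerivAt
end

section
/- Let (Ω, 𝓕, P) be a probability space with a filtration 𝓕₀ ⊆ 𝓕₁ ⊆ ⋯ ⊆ 𝓕ₙ, let W ≥ 1 be an integer, and partition {1, …, n} into the sets 𝓐ⱼ = {j, j+W, j+2W, …} for j = 1, …, W. Let V₁, …, Vₙ be real random variables such that: (i) aᵢ ≤ Vᵢ ≤ bᵢ almost surely for constants aᵢ ≤ bᵢ; (ii) Vᵢ is 𝓕ᵢ-measurable; (iii) for each j ∈ {1,…,W} and each i ≥ 1 with j + iW ≤ n, E[V_{j+iW} | 𝓕_{j+(i−1)W}] = 0 almost surely, and E[Vⱼ | 𝓕₀] = 0 almost surely. Then for every t > 0, P{Σᵢ Vᵢ > t} ≤ exp(−2t²/(W Σᵢ (bᵢ − aᵢ)²)) and P{Σᵢ Vᵢ < −t} ≤ exp(−2t²/(W Σᵢ (bᵢ − aᵢ)²)). -/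
open MeasureTheory

/-!
Split the indices into their `W` residue classes modulo `W`. Within a class, consecutive indices
differ by at least `W`, so the summands form a martingale difference sequence. Tilting by the
exponential of a partial sum keeps the next difference centered, hence Hoeffding's lemma under the
tilted measure bounds one more factor of the moment generating function. The `W` class sums are
arbitrarily dependent: their sub-Gaussian norms (square roots of variance proxies) add, and
Cauchy–Schwarz costs the factor `W`. The tails then follow from the Chernoff bound.
-/

section SubGaussian

open ProbabilityTheory
open scoped NNReal

variable {Ω : Type*} {m m0 : MeasurableSpace Ω} {μ : Measure Ω}

lemma mgf_add_eq_mgf_mul_mgf_tilted [NeZero μ] {X Y : Ω → ℝ} {t : ℝ}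
    (hX : Integrable (fun ω ↦ Real.exp (t * X ω)) μ) :
    mgf (X + Y) μ t = mgf X μ t * mgf Y (μ.tilted fun ω ↦ t * X ω) t := by
  have mgf_ne_zero : ∫ ω, Real.exp (t * X ω) ∂μ ≠ 0 := (integral_exp_pos hX).ne'
  simp only [mgf, integral_exp_tilted, mul_div_cancel₀ _ mgf_ne_zero, Pi.add_apply, mul_add]

lemma hasSubgaussianMGF_add_of_tilted [NeZero μ] {X Y : Ω → ℝ} {c d : ℝ≥0}
    (hX : HasSubgaussianMGF X c μ)
    (hY : ∀ t : ℝ, HasSubgaussianMGF Y d (μ.tilted fun ω ↦ t * X ω)) :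
    HasSubgaussianMGF (X + Y) (c + d) μ where
  integrable_exp_mul t := by
    have h := (hY t).integrable_exp_mul t
    rw [integrable_tilted_iff (hX.integrable_exp_mul t)] at h
    simpa only [Pi.add_apply, mul_add, Real.exp_add, smul_eq_mul] using h
  mgf_le t := calc
    mgf (X + Y) μ t = mgf X μ t * mgf Y (μ.tilted fun ω ↦ t * X ω) t :=
      mgf_add_eq_mgf_mul_mgf_tilted (hX.integrable_exp_mul t)
    _ ≤ Real.exp (c * t ^ 2 / 2) * Real.exp (d * t ^ 2 / 2) :=
      mul_le_mul (hX.mgf_le t) ((hY t).mgf_le t) mgf_nonneg (Real.exp_nonneg _)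
    _ = Real.exp (↑(c + d) * t ^ 2 / 2) := by
      rw [← Real.exp_add]
      push_cast
      ring_nf

lemma integral_mul_eq_zero_of_condExp_eq_zero (hm : m ≤ m0) [SigmaFinite (μ.trim hm)]
    {f g : Ω → ℝ} (hf : StronglyMeasurable[m] f) (hfg : Integrable (f * g) μ)
    (hg : Integrable g μ) (hcond : μ[g | m] =ᵐ[μ] 0) :
    ∫ ω, f ω * g ω ∂μ = 0 := by
  have condExp_mul_eq_zero : μ[f * g | m] =ᵐ[μ] 0 := by
    filter_upwards [condExp_mul_of_stronglyMeasurable_left hf hfg hg, hcond] with ω hpull hzero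
    simp only [hpull, Pi.mul_apply, hzero, Pi.zero_apply, mul_zero]
  calc ∫ ω, f ω * g ω ∂μ = ∫ ω, (μ[f * g | m]) ω ∂μ := (integral_condExp hm).symm
    _ = 0 := integral_eq_zero_of_ae condExp_mul_eq_zero

lemma integral_tilted_eq_zero_of_condExp_eq_zero (hm : m ≤ m0) [SigmaFinite (μ.trim hm)]
    {f g : Ω → ℝ} (hf : StronglyMeasurable[m] f)
    (hfg : Integrable (fun ω ↦ Real.exp (f ω) * g ω) μ) (hg : Integrable g μ)
    (hcond : μ[g | m] =ᵐ[μ] 0) :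
    ∫ ω, g ω ∂(μ.tilted f) = 0 := by
  have hexp : StronglyMeasurable[m] fun ω ↦ Real.exp (f ω) :=
    Real.continuous_exp.comp_stronglyMeasurable hf
  simp only [integral_tilted, smul_eq_mul, div_mul_eq_mul_div, integral_div,
    integral_mul_eq_zero_of_condExp_eq_zero hm hexp hfg hg hcond, zero_div]

lemma hasSubgaussianMGF_tilted_of_condExp_eq_zero [IsProbabilityMeasure μ] (hm : m ≤ m0)
    {f Y : Ω → ℝ} {a b : ℝ} (hf : StronglyMeasurable[m] f)
    (hexp : Integrable (fun ω ↦ Real.exp (f ω)) μ) (hY : AEMeasurable Y μ)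
    (hbd : ∀ᵐ ω ∂μ, Y ω ∈ Set.Icc a b) (hcond : μ[Y | m] =ᵐ[μ] 0) :
    HasSubgaussianMGF Y ((‖b - a‖₊ / 2) ^ 2) (μ.tilted f) := by
  have : IsProbabilityMeasure (μ.tilted f) := isProbabilityMeasure_tilted hexp
  have hac : μ.tilted f ≪ μ := tilted_absolutelyContinuous μ f
  have hY_tilted : AEMeasurable Y (μ.tilted f) := hY.mono_ac hac
  have hbd_tilted : ∀ᵐ ω ∂(μ.tilted f), Y ω ∈ Set.Icc a b := hac.ae_le hbd
  have integrable_exp_mul : Integrable (fun ω ↦ Real.exp (f ω) * Y ω) μ :=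
    (integrable_tilted_iff hexp Y).mp (.of_mem_Icc a b hY_tilted hbd_tilted)
  exact hasSubgaussianMGF_of_mem_Icc_of_integral_eq_zero hY_tilted hbd_tilted
    (integral_tilted_eq_zero_of_condExp_eq_zero hm hf integrable_exp_mul
      (.of_mem_Icc a b hY hbd) hcond)

lemma hasSubgaussianMGF_add_of_condExp_eq_zero [IsProbabilityMeasure μ] (hm : m ≤ m0)
    {X Y : Ω → ℝ} {c : ℝ≥0} {a b : ℝ} (hX : HasSubgaussianMGF X c μ)
    (hXm : StronglyMeasurable[m] X) (hY : AEMeasurable Y μ)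
    (hbd : ∀ᵐ ω ∂μ, Y ω ∈ Set.Icc a b) (hcond : μ[Y | m] =ᵐ[μ] 0) :
    HasSubgaussianMGF (X + Y) (c + (‖b - a‖₊ / 2) ^ 2) μ :=
  hasSubgaussianMGF_add_of_tilted hX fun t ↦
    hasSubgaussianMGF_tilted_of_condExp_eq_zero hm (hXm.const_mul t) (hX.integrable_exp_mul t)
      hY hbd hcond

lemma hasSubgaussianMGF_sum_of_condExp_eq_zero [IsProbabilityMeasure μ] {ι : Type*}
    [LinearOrder ι] {s : Finset ι} {𝒢 : ι → MeasurableSpace Ω} {V : ι → Ω → ℝ} {a b : ι → ℝ}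
    (h𝒢 : ∀ i ∈ s, 𝒢 i ≤ m0) (hV : ∀ i ∈ s, AEMeasurable (V i) μ)
    (hbd : ∀ i ∈ s, ∀ᵐ ω ∂μ, V i ω ∈ Set.Icc (a i) (b i))
    (hpast : ∀ i ∈ s, ∀ k ∈ s, k < i → StronglyMeasurable[𝒢 i] (V k))
    (hcond : ∀ i ∈ s, μ[V i | 𝒢 i] =ᵐ[μ] 0) :
    HasSubgaussianMGF (∑ i ∈ s, V i) (∑ i ∈ s, (‖b i - a i‖₊ / 2) ^ 2) μ := by
  induction s using Finset.induction_on_max with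
  | empty => simpa only [Finset.sum_empty] using HasSubgaussianMGF.zero
  | insert i s hlt ih =>
    have hi : i ∉ s := fun h ↦ (hlt i h).false
    rw [Finset.sum_insert hi, Finset.sum_insert hi, add_comm (V i), add_comm (_ ^ 2)]
    simp only [Finset.forall_mem_insert] at h𝒢 hV hbd hcond
    have sum_subgaussian := ih h𝒢.2 hV.2 hbd.2
      (fun j hj k hk ↦ hpast j (Finset.mem_insert_of_mem hj) k (Finset.mem_insert_of_mem hk))
      hcond.2
    have sum_measurable : StronglyMeasurable[𝒢 i] (∑ k ∈ s, V k) :=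
      Finset.stronglyMeasurable_sum s fun k hk ↦
        hpast i (Finset.mem_insert_self i s) k (Finset.mem_insert_of_mem hk) (hlt k hk)
    exact hasSubgaussianMGF_add_of_condExp_eq_zero h𝒢.1 sum_subgaussian sum_measurable
      hV.1 hbd.1 hcond.1

lemma hasSubgaussianMGF_mono {X : Ω → ℝ} {c d : ℝ≥0} (hX : HasSubgaussianMGF X c μ)
    (hcd : c ≤ d) : HasSubgaussianMGF X d μ where
  integrable_exp_mul := hX.integrable_exp_mul
  mgf_le t := (hX.mgf_le t).trans (by gcongr)

lemma hasSubgaussianMGF_sum_sq_sum_sqrt [IsZeroOrProbabilityMeasure μ] {ι : Type*}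
    {s : Finset ι} {X : ι → Ω → ℝ} {c : ι → ℝ≥0}
    (hX : ∀ i ∈ s, HasSubgaussianMGF (X i) (c i) μ) :
    HasSubgaussianMGF (∑ i ∈ s, X i) ((∑ i ∈ s, (c i).sqrt) ^ 2) μ := by
  induction s using Finset.cons_induction with
  | empty => simp
  | cons i s hi ih =>
    simp only [Finset.forall_mem_cons] at hX
    rw [Finset.sum_cons, Finset.sum_cons]
    simpa only [NNReal.sqrt_sq] using! hX.1.add (ih hX.2)

lemma hasSubgaussianMGF_sum_card_mul_sum [IsZeroOrProbabilityMeasure μ] {ι : Type*}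
    {s : Finset ι} {X : ι → Ω → ℝ} {c : ι → ℝ≥0}
    (hX : ∀ i ∈ s, HasSubgaussianMGF (X i) (c i) μ) :
    HasSubgaussianMGF (∑ i ∈ s, X i) (s.card * ∑ i ∈ s, c i) μ := by
  have sq_sum_sqrt_le : (∑ i ∈ s, (c i).sqrt) ^ 2 ≤ s.card * ∑ i ∈ s, c i := by
    simpa only [NNReal.sq_sqrt] using
      sq_sum_le_card_mul_sum_sq (s := s) (f := fun i ↦ (c i).sqrt)
  exact hasSubgaussianMGF_mono (hasSubgaussianMGF_sum_sq_sum_sqrt hX) sq_sum_sqrt_le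

/- The truncated subtraction gives `ℱ (i - W) = ℱ 0` for `i ≤ W`, so `hcond` covers the initial
indices of the progressions as well. -/
lemma hasSubgaussianMGF_sum_of_gap_of_condExp_sub_eq_zero [IsProbabilityMeasure μ]
    {s : Finset ℕ} {W : ℕ} {ℱ : Filtration ℕ m0} {V : ℕ → Ω → ℝ} {a b : ℕ → ℝ}
    (hgap : ∀ i ∈ s, ∀ k ∈ s, k < i → k + W ≤ i)
    (hbd : ∀ i ∈ s, ∀ᵐ ω ∂μ, V i ω ∈ Set.Icc (a i) (b i))
    (hmeas : ∀ i ∈ s, StronglyMeasurable[ℱ i] (V i))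
    (hcond : ∀ i ∈ s, μ[V i | ℱ (i - W)] =ᵐ[μ] 0) :
    HasSubgaussianMGF (∑ i ∈ s, V i) (∑ i ∈ s, (‖b i - a i‖₊ / 2) ^ 2) μ := by
  have haemeas : ∀ i ∈ s, AEMeasurable (V i) μ := fun i hi ↦
    ((hmeas i hi).mono (ℱ.le i)).measurable.aemeasurable
  have hpast : ∀ i ∈ s, ∀ k ∈ s, k < i → StronglyMeasurable[ℱ (i - W)] (V k) :=
    fun i hi k hk hki ↦ (hmeas k hk).mono (ℱ.mono (Nat.le_sub_of_add_le (hgap i hi k hk hki)))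
  exact hasSubgaussianMGF_sum_of_condExp_eq_zero (fun i _ ↦ ℱ.le (i - W)) haemeas hbd hpast hcond

lemma hasSubgaussianMGF_sum_of_condExp_sub_eq_zero [IsProbabilityMeasure μ] {s : Finset ℕ}
    {W : ℕ} (hW : 0 < W) {ℱ : Filtration ℕ m0} {V : ℕ → Ω → ℝ} {a b : ℕ → ℝ}
    (hbd : ∀ i ∈ s, ∀ᵐ ω ∂μ, V i ω ∈ Set.Icc (a i) (b i))
    (hmeas : ∀ i ∈ s, StronglyMeasurable[ℱ i] (V i))
    (hcond : ∀ i ∈ s, μ[V i | ℱ (i - W)] =ᵐ[μ] 0) :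
    HasSubgaussianMGF (∑ i ∈ s, V i) (W * ∑ i ∈ s, (‖b i - a i‖₊ / 2) ^ 2) μ := by
  have class_subgaussian (r : ℕ) : HasSubgaussianMGF (∑ i ∈ s with i % W = r, V i)
      (∑ i ∈ s with i % W = r, (‖b i - a i‖₊ / 2) ^ 2) μ := by
    have mem_of_mem_class : ∀ i ∈ {i ∈ s | i % W = r}, i ∈ s := Finset.filter_subset _ s
    refine hasSubgaussianMGF_sum_of_gap_of_condExp_sub_eq_zero (fun i hi k hk hki ↦ ?_)
      (fun i hi ↦ hbd i (mem_of_mem_class i hi)) (fun i hi ↦ hmeas i (mem_of_mem_class i hi))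
      (fun i hi ↦ hcond i (mem_of_mem_class i hi))
    have modEq : k ≡ i [MOD W] :=
      (Finset.mem_filter.mp hk).2.trans (Finset.mem_filter.mp hi).2.symm
    exact modEq.add_le_of_lt hki
  have mod_mem_range : ∀ i ∈ s, i % W ∈ Finset.range W :=
    fun i _ ↦ Finset.mem_range.mpr (Nat.mod_lt i hW)
  simpa only [Finset.card_range, Finset.sum_fiberwise_of_maps_to mod_mem_range] using
    hasSubgaussianMGF_sum_card_mul_sum (s := Finset.range W) fun r _ ↦ class_subgaussian r

lemma measureReal_lt_le_of_hasSubgaussianMGF [IsFiniteMeasure μ] {X : Ω → ℝ} {c : ℝ≥0}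
    (hX : HasSubgaussianMGF X c μ) {t : ℝ} (ht : 0 ≤ t) :
    μ.real {ω | t < X ω} ≤ Real.exp (-t ^ 2 / (2 * c)) :=
  (measureReal_mono (Set.ofPred_subset_ofPred.mpr fun _ ↦ le_of_lt)).trans (hX.measure_ge_le ht)

lemma measureReal_lt_neg_le_of_hasSubgaussianMGF [IsFiniteMeasure μ] {X : Ω → ℝ} {c : ℝ≥0}
    (hX : HasSubgaussianMGF X c μ) {t : ℝ} (ht : 0 ≤ t) :
    μ.real {ω | X ω < -t} ≤ Real.exp (-t ^ 2 / (2 * c)) := by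
  simpa only [Pi.neg_apply, lt_neg] using measureReal_lt_le_of_hasSubgaussianMGF hX.neg ht

end SubGaussian

lemma exists_mem_Icc_add_mul_eq {i W : ℕ} (hi : 1 ≤ i) (hW : 0 < W) :
    ∃ j ∈ Finset.Icc 1 W, ∃ k, j + k * W = i := by
  refine ⟨(i - 1) % W + 1, ?_, (i - 1) / W, ?_⟩
  · exact Finset.mem_Icc.mpr ⟨Nat.le_add_left _ _, Nat.mod_lt _ hW⟩
  · have := Nat.mod_add_div' (i - 1) W
    omega

lemma neg_sq_div_two_mul_sum_sq_half_nnnorm {ι : Type*} (s : Finset ι) (a b : ι → ℝ) (W : ℕ)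
    (t : ℝ) :
    -t ^ 2 / (2 * ((W * ∑ i ∈ s, (‖b i - a i‖₊ / 2) ^ 2 : NNReal) : ℝ)) =
      -2 * t ^ 2 / (W * ∑ i ∈ s, (b i - a i) ^ 2) := by
  push_cast
  simp only [div_pow, Real.norm_eq_abs, sq_abs, ← Finset.sum_div]
  ring

/-- **Dependent Hoeffding's inequality, Lemma 4.**
Suppose `V₁, …, Vₙ` are bounded (`aᵢ ≤ Vᵢ ≤ bᵢ` a.s.), adapted to the filtration `𝓕`, and
along each arithmetic progression `𝓐ⱼ = {j, j + W, j + 2W, …}` (for `j = 1, …, W`) the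
conditional means vanish: `E[V_{j+iW} | 𝓕_{j+(i−1)W}] = 0` and `E[Vⱼ | 𝓕₀] = 0`.
Then both tails of `Σᵢ Vᵢ` are bounded by `exp(−2t² / (W Σᵢ (bᵢ − aᵢ)²))`. -/
theorem dependent_hoeffding_inequality
    {Ω : Type*} {m0 : MeasurableSpace Ω} (P : Measure Ω) [IsProbabilityMeasure P]
    (n W : ℕ) (hW : 1 ≤ W)
    (ℱ : Filtration ℕ m0)
    (V : ℕ → Ω → ℝ) (a b : ℕ → ℝ)
    (hab : ∀ i ∈ Finset.Icc 1 n, a i ≤ b i)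
    (hbd : ∀ i ∈ Finset.Icc 1 n, ∀ᵐ ω ∂P, a i ≤ V i ω ∧ V i ω ≤ b i)
    (hmeas : ∀ i ∈ Finset.Icc 1 n, StronglyMeasurable[ℱ i] (V i))
    (hint : ∀ i ∈ Finset.Icc 1 n, Integrable (V i) P)
    (hcond : ∀ j ∈ Finset.Icc 1 W, ∀ i : ℕ, 1 ≤ i → j + i * W ≤ n →
      P[V (j + i * W)|ℱ (j + (i - 1) * W)] =ᵐ[P] 0)
    (hcond0 : ∀ j ∈ Finset.Icc 1 W, j ≤ n → P[V j|ℱ 0] =ᵐ[P] 0)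
    (t : ℝ) (ht : 0 < t) :
    (P {ω | t < ∑ i ∈ Finset.Icc 1 n, V i ω}).toReal ≤
        Real.exp (-2 * t ^ 2 / (W * ∑ i ∈ Finset.Icc 1 n, (b i - a i) ^ 2)) ∧
      (P {ω | ∑ i ∈ Finset.Icc 1 n, V i ω < -t}).toReal ≤
        Real.exp (-2 * t ^ 2 / (W * ∑ i ∈ Finset.Icc 1 n, (b i - a i) ^ 2)) := by
  have hcond_sub : ∀ i ∈ Finset.Icc 1 n, P[V i | ℱ (i - W)] =ᵐ[P] 0 := by
    intro i hi
    obtain ⟨one_le_i, i_le_n⟩ := Finset.mem_Icc.mp hi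
    obtain ⟨j, hj, k, rfl⟩ := exists_mem_Icc_add_mul_eq one_le_i hW
    cases k with
    | zero =>
      have sub_eq_zero : j - W = 0 := Nat.sub_eq_zero_of_le (Finset.mem_Icc.mp hj).2
      simpa only [zero_mul, add_zero, sub_eq_zero] using hcond0 j hj (by omega)
    | succ k =>
      have sub_eq : j + (k + 1) * W - W = j + k * W := by rw [add_one_mul]; omega
      simpa only [sub_eq, Nat.add_sub_cancel] using hcond j hj (k + 1) (Nat.le_add_left 1 k) i_le_n
  have subgaussian := hasSubgaussianMGF_sum_of_condExp_sub_eq_zero hW hbd hmeas hcond_sub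
  have upper_tail := measureReal_lt_le_of_hasSubgaussianMGF subgaussian ht.le
  have lower_tail := measureReal_lt_neg_le_of_hasSubgaussianMGF subgaussian ht.le
  simp only [Finset.sum_apply, neg_sq_div_two_mul_sum_sq_half_nnnorm] at upper_tail lower_tail
  exact ⟨upper_tail, lower_tail⟩
end

section
/- Let (Ω, 𝓕, P) be a probability space with a filtration 𝓚₀ ⊆ 𝓚₁ ⊆ ⋯ ⊆ 𝓚ₙ (with the convention 𝓚ᵢ = 𝓚₀ for i < 0), and let ρ̃₁, …, ρ̃ₙ be random variables with 0 ≤ ρ̃ᵢ ≤ D almost surely for a constant D > 0, each ρ̃ᵢ being 𝓚ᵢ-measurable, and E[ρ̃ᵢ | 𝓚_{i−2}] ≥ ρ almost surely for every i, where ρ ≥ 0. Then for every t > 0, P{ (1/n) Σ_{i=1}^n ρ̃ᵢ < ρ − t } ≤ exp(−n t² / (4 D²)). -/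
open MeasureTheory

/-!
A conditional mean taken `w` steps back controls a summand given any partial sum of summands that
are at least `w` steps older: tilting the measure by the exponential of that partial sum keeps the
mean of the new summand nonpositive, so Hoeffding's lemma applies under the tilted measure. Along
one residue class modulo `w` this bounds the moment generating function of the sum; Jensen's
inequality for `exp` glues the `w` residue classes together at the cost of a factor `w` in the
variance proxy, and a Chernoff bound concludes.
-/

open ProbabilityTheory Real Finset

section MomentGeneratingFunction

variable {Ω : Type*} {m m0 : MeasurableSpace Ω} {μ : Measure Ω}

lemma mgf_le_of_mem_Icc_of_integral_nonpos [IsProbabilityMeasure μ] {Y : Ω → ℝ} {a b t : ℝ}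
    (hY : AEMeasurable Y μ) (hbd : ∀ᵐ ω ∂μ, Y ω ∈ Set.Icc a b) (hmean : μ[Y] ≤ 0) (ht : 0 ≤ t) :
    mgf Y μ t ≤ exp (t ^ 2 * (b - a) ^ 2 / 8) := by
  have hcentered : mgf (fun ω ↦ Y ω - μ[Y]) μ t ≤ exp (t ^ 2 * (b - a) ^ 2 / 8) := by
    refine ((hasSubgaussianMGF_of_mem_Icc hY hbd).mgf_le t).trans_eq ?_
    simp only [NNReal.coe_pow, NNReal.coe_div, coe_nnnorm, norm_eq_abs, NNReal.coe_ofNat, div_pow,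
      sq_abs]
    ring_nf
  calc mgf Y μ t
      = exp (t * μ[Y]) * mgf (fun ω ↦ Y ω - μ[Y]) μ t := by
        rw [mgf, mgf, ← integral_const_mul]
        simp_rw [← exp_add]
        ring_nf
    _ ≤ 1 * exp (t ^ 2 * (b - a) ^ 2 / 8) := by
        gcongr
        · exact mgf_nonneg
        · exact exp_le_one_iff.2 (mul_nonpos_of_nonneg_of_nonpos ht hmean)
    _ = exp (t ^ 2 * (b - a) ^ 2 / 8) := one_mul _

lemma integral_tilted_nonpos_of_condExp_nonpos (hm : m ≤ m0) [SigmaFinite (μ.trim hm)]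
    {f Y : Ω → ℝ} (hf : StronglyMeasurable[m] f) (hY : Integrable Y μ)
    (hfY : Integrable (fun ω ↦ exp (f ω) * Y ω) μ) (hcond : μ[Y | m] ≤ᵐ[μ] 0) :
    (μ.tilted f)[Y] ≤ 0 := by
  have hexp : StronglyMeasurable[m] fun ω ↦ exp (f ω) :=
    continuous_exp.comp_stronglyMeasurable hf
  have hpull : ∫ ω, exp (f ω) * Y ω ∂μ ≤ 0 := by
    rw [← integral_condExp hm]
    refine integral_nonpos_of_ae ?_
    filter_upwards [condExp_mul_of_stronglyMeasurable_left hexp hfY hY, hcond] with ω hmul hω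
    exact hmul.trans_le (mul_nonpos_of_nonneg_of_nonpos (exp_pos _).le hω)
  calc (μ.tilted f)[Y]
      = (∫ ω, exp (f ω) * Y ω ∂μ) / ∫ ω, exp (f ω) ∂μ := by
        rw [integral_tilted, ← integral_div]
        simp only [smul_eq_mul, div_mul_eq_mul_div]
    _ ≤ 0 := div_nonpos_of_nonpos_of_nonneg hpull (integral_nonneg fun _ ↦ (exp_pos _).le)

lemma mgf_add_le_of_condExp_nonpos [IsProbabilityMeasure μ] (hm : m ≤ m0) {S Y : Ω → ℝ}
    {a b t : ℝ} (hS : StronglyMeasurable[m] S) (hSexp : Integrable (fun ω ↦ exp (t * S ω)) μ)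
    (hY : AEMeasurable Y μ) (hbd : ∀ᵐ ω ∂μ, Y ω ∈ Set.Icc a b) (hcond : μ[Y | m] ≤ᵐ[μ] 0)
    (ht : 0 ≤ t) :
    mgf (S + Y) μ t ≤ mgf S μ t * exp (t ^ 2 * (b - a) ^ 2 / 8) := by
  have : IsProbabilityMeasure (μ.tilted (t * S ·)) := isProbabilityMeasure_tilted hSexp
  have hac : μ.tilted (t * S ·) ≪ μ := tilted_absolutelyContinuous μ _
  have hSY : Integrable (fun ω ↦ exp (t * S ω) * Y ω) μ := by
    refine hSexp.mul_bdd (c := max |a| |b|) hY.aestronglyMeasurable ?_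
    filter_upwards [hbd] with ω hω using abs_le_max_abs_abs hω.1 hω.2
  have hmean : (μ.tilted (t * S ·))[Y] ≤ 0 :=
    integral_tilted_nonpos_of_condExp_nonpos hm (hS.const_mul t) (.of_mem_Icc a b hY hbd) hSY hcond
  have hhoeffding : mgf Y (μ.tilted (t * S ·)) t ≤ exp (t ^ 2 * (b - a) ^ 2 / 8) :=
    mgf_le_of_mem_Icc_of_integral_nonpos (hY.mono_ac hac) (hac hbd) hmean ht
  have htilt : mgf Y (μ.tilted (t * S ·)) t = mgf (S + Y) μ t / mgf S μ t := by
    simp only [mgf, integral_exp_tilted, Pi.add_apply, mul_add]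
  rwa [htilt, div_le_iff₀' (mgf_pos hSexp)] at hhoeffding

lemma integrable_exp_mul_sum_of_mem_Icc [IsFiniteMeasure μ] {ι : Type*} {s : Finset ι}
    {Y : ι → Ω → ℝ} {a b : ι → ℝ} (hY : ∀ i ∈ s, AEMeasurable (Y i) μ)
    (hbd : ∀ i ∈ s, ∀ᵐ ω ∂μ, Y i ω ∈ Set.Icc (a i) (b i)) (t : ℝ) :
    Integrable (fun ω ↦ exp (t * (∑ i ∈ s, Y i) ω)) μ := by
  refine integrable_exp_mul_of_mem_Icc (a := ∑ i ∈ s, a i) (b := ∑ i ∈ s, b i)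
    (s.aemeasurable_sum hY) ?_
  filter_upwards [(ae_ball_iff s.countable_toSet).2 hbd] with ω hω
  rw [Finset.sum_apply]
  exact ⟨sum_le_sum fun i hi ↦ (hω i hi).1, sum_le_sum fun i hi ↦ (hω i hi).2⟩

lemma exp_sum_le_average_exp_card_mul {ι : Type*} {s : Finset ι} (hs : s.Nonempty) (x : ι → ℝ) :
    exp (∑ i ∈ s, x i) ≤ (#s : ℝ)⁻¹ * ∑ i ∈ s, exp (#s * x i) := by
  have hcard : (#s : ℝ) ≠ 0 := by exact_mod_cast hs.card_pos.ne'
  have hweights : ∑ _i ∈ s, (#s : ℝ)⁻¹ = 1 := by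
    rw [sum_const, nsmul_eq_mul, mul_inv_cancel₀ hcard]
  have hjensen := convexOn_exp.map_sum_le (t := s) (p := fun i ↦ #s * x i)
    (fun _ _ ↦ by positivity) hweights (fun _ _ ↦ Set.mem_univ _)
  simpa only [smul_eq_mul, inv_mul_cancel_left₀ hcard, ← mul_sum] using hjensen

-- Recentering by `c` before applying Jensen makes every term contribute at most `1`, which is what
-- turns the average of exponentials into the exponential of a sum.
lemma mgf_sum_le_exp_sum {ι : Type*} {s : Finset ι} (hs : s.Nonempty) {T : ι → Ω → ℝ}
    {c : ι → ℝ} {t : ℝ} (hint : ∀ i ∈ s, Integrable (fun ω ↦ exp (#s * t * T i ω)) μ)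
    (hmgf : ∀ i ∈ s, mgf (T i) μ (#s * t) ≤ exp (#s * c i)) :
    mgf (∑ i ∈ s, T i) μ t ≤ exp (∑ i ∈ s, c i) := by
  have hcard : (#s : ℝ) ≠ 0 := by exact_mod_cast hs.card_pos.ne'
  have hsplit (i : ι) (ω : Ω) : exp (#s * (t * T i ω - c i)) =
      exp (-(#s * c i)) * exp (#s * t * T i ω) := by
    rw [← exp_add]
    ring_nf
  have hterm_int (i : ι) (hi : i ∈ s) : Integrable (fun ω ↦ exp (#s * (t * T i ω - c i))) μ := by
    simpa only [hsplit] using (hint i hi).const_mul _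
  have hterm_le (i : ι) (hi : i ∈ s) : ∫ ω, exp (#s * (t * T i ω - c i)) ∂μ ≤ 1 := by
    simp only [hsplit, integral_const_mul]
    rw [exp_neg, inv_mul_le_one₀ (exp_pos _)]
    exact hmgf i hi
  calc mgf (∑ i ∈ s, T i) μ t
      = exp (∑ i ∈ s, c i) * ∫ ω, exp (∑ i ∈ s, (t * T i ω - c i)) ∂μ := by
        rw [mgf, ← integral_const_mul]
        simp only [← exp_add, sum_sub_distrib, add_sub_cancel, Finset.sum_apply, mul_sum]
    _ ≤ exp (∑ i ∈ s, c i) * ∫ ω, (#s : ℝ)⁻¹ * ∑ i ∈ s, exp (#s * (t * T i ω - c i)) ∂μ := by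
        refine mul_le_mul_of_nonneg_left ?_ (exp_pos _).le
        exact integral_mono_of_nonneg (.of_forall fun _ ↦ (exp_pos _).le)
          ((integrable_finsetSum s hterm_int).const_mul _)
          (.of_forall fun _ ↦ exp_sum_le_average_exp_card_mul hs _)
    _ ≤ exp (∑ i ∈ s, c i) * ((#s : ℝ)⁻¹ * ∑ _i ∈ s, 1) := by
        rw [integral_const_mul, integral_finsetSum s hterm_int]
        gcongr with i hi
        exact hterm_le i hi
    _ = exp (∑ i ∈ s, c i) := by
        rw [sum_const, nsmul_one, inv_mul_cancel₀ hcard, mul_one]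

end MomentGeneratingFunction

section DependentHoeffding

variable {Ω : Type*} {m0 : MeasurableSpace Ω} {μ : Measure Ω} [IsProbabilityMeasure μ]
  {ℱ : Filtration ℕ m0} {Y : ℕ → Ω → ℝ} {a b : ℕ → ℝ} {s : Finset ℕ} {w : ℕ}

lemma mgf_sum_le_of_separated
    (hsep : ∀ i ∈ s, ∀ j ∈ s, i < j → i + w ≤ j)
    (hY : ∀ i ∈ s, StronglyMeasurable[ℱ i] (Y i))
    (hbd : ∀ i ∈ s, ∀ᵐ ω ∂μ, Y i ω ∈ Set.Icc (a i) (b i))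
    (hcond : ∀ i ∈ s, μ[Y i | ℱ (i - w)] ≤ᵐ[μ] 0) {t : ℝ} (ht : 0 ≤ t) :
    mgf (∑ i ∈ s, Y i) μ t ≤ exp (t ^ 2 * (∑ i ∈ s, (b i - a i) ^ 2) / 8) := by
  induction s using Finset.induction_on_max with
  | empty => simp
  | insert j s hlt ih =>
    simp only [mem_insert, forall_eq_or_imp] at hsep hY hbd hcond
    have hj : j ∉ s := fun hmem ↦ (hlt j hmem).false
    have hpast : StronglyMeasurable[ℱ (j - w)] (∑ i ∈ s, Y i) :=
      Finset.stronglyMeasurable_sum s fun i hi ↦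
        (hY.2 i hi).mono (ℱ.mono (Nat.le_sub_of_add_le ((hsep.2 i hi).1 (hlt i hi))))
    have hexp : Integrable (fun ω ↦ exp (t * (∑ i ∈ s, Y i) ω)) μ :=
      integrable_exp_mul_sum_of_mem_Icc
        (fun i hi ↦ ((hY.2 i hi).mono (ℱ.le i)).measurable.aemeasurable) hbd.2 t
    rw [sum_insert hj, sum_insert hj, add_comm (Y j), add_comm ((b j - a j) ^ 2), mul_add, add_div,
      exp_add]
    calc mgf (∑ i ∈ s, Y i + Y j) μ t
        ≤ mgf (∑ i ∈ s, Y i) μ t * exp (t ^ 2 * (b j - a j) ^ 2 / 8) :=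
          mgf_add_le_of_condExp_nonpos (ℱ.le _) hpast hexp
            (hY.1.mono (ℱ.le j)).measurable.aemeasurable hbd.1 hcond.1 ht
      _ ≤ _ := by
          gcongr
          exact ih (fun i hi k hk ↦ (hsep.2 i hi).2 k hk) hY.2 hbd.2 hcond.2

lemma mgf_sum_le_of_condExp_lag_nonpos (hw : w ≠ 0)
    (hY : ∀ i ∈ s, StronglyMeasurable[ℱ i] (Y i))
    (hbd : ∀ i ∈ s, ∀ᵐ ω ∂μ, Y i ω ∈ Set.Icc (a i) (b i))
    (hcond : ∀ i ∈ s, μ[Y i | ℱ (i - w)] ≤ᵐ[μ] 0) {t : ℝ} (ht : 0 ≤ t) :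
    mgf (∑ i ∈ s, Y i) μ t ≤ exp (w * t ^ 2 * (∑ i ∈ s, (b i - a i) ^ 2) / 8) := by
  have hmod (i : ℕ) (_ : i ∈ s) : i % w ∈ range w :=
    mem_range.2 (Nat.mod_lt i (Nat.pos_of_ne_zero hw))
  have hclass (r : ℕ) : mgf (∑ i ∈ s with i % w = r, Y i) μ (w * t) ≤
      exp (w * (w * t ^ 2 * (∑ i ∈ s with i % w = r, (b i - a i) ^ 2) / 8)) := by
    have hsub {i : ℕ} (hi : i ∈ s.filter (· % w = r)) : i ∈ s := (mem_filter.1 hi).1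
    have hsep : ∀ i ∈ s.filter (· % w = r), ∀ j ∈ s.filter (· % w = r), i < j → i + w ≤ j :=
      fun i hi j hj ↦ Nat.ModEq.add_le_of_lt
        ((mem_filter.1 hi).2.trans (mem_filter.1 hj).2.symm)
    refine (mgf_sum_le_of_separated hsep (fun i hi ↦ hY i (hsub hi))
      (fun i hi ↦ hbd i (hsub hi)) (fun i hi ↦ hcond i (hsub hi))
      (mul_nonneg w.cast_nonneg ht)).trans_eq ?_
    ring_nf
  have hint (r : ℕ) :
      Integrable (fun ω ↦ exp (w * t * (∑ i ∈ s with i % w = r, Y i) ω)) μ :=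
    integrable_exp_mul_sum_of_mem_Icc
      (fun i hi ↦ ((hY i (mem_filter.1 hi).1).mono (ℱ.le i)).measurable.aemeasurable)
      (fun i hi ↦ hbd i (mem_filter.1 hi).1) _
  have hglue := mgf_sum_le_exp_sum (μ := μ) (nonempty_range_iff.2 hw)
    (T := fun r ↦ ∑ i ∈ s with i % w = r, Y i)
    (c := fun r ↦ w * t ^ 2 * (∑ i ∈ s with i % w = r, (b i - a i) ^ 2) / 8) (t := t)
    (fun r _ ↦ by simpa only [card_range] using hint r)
    (fun r _ ↦ by simpa only [card_range] using hclass r)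
  rwa [← sum_div, ← mul_sum, sum_fiberwise_of_maps_to hmod, sum_fiberwise_of_maps_to hmod] at hglue

lemma measureReal_sum_ge_le_of_condExp_lag_nonpos (hw : w ≠ 0)
    (hY : ∀ i ∈ s, StronglyMeasurable[ℱ i] (Y i))
    (hbd : ∀ i ∈ s, ∀ᵐ ω ∂μ, Y i ω ∈ Set.Icc (a i) (b i))
    (hcond : ∀ i ∈ s, μ[Y i | ℱ (i - w)] ≤ᵐ[μ] 0)
    (hV : 0 < ∑ i ∈ s, (b i - a i) ^ 2) {ε : ℝ} (hε : 0 ≤ ε) :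
    μ.real {ω | ε ≤ ∑ i ∈ s, Y i ω} ≤ exp (-2 * ε ^ 2 / (w * ∑ i ∈ s, (b i - a i) ^ 2)) := by
  set V := ∑ i ∈ s, (b i - a i) ^ 2
  -- `t = 4 ε / (w V)` minimizes the Chernoff exponent `-t ε + w t ^ 2 V / 8`.
  set t := 4 * ε / (w * V) with ht_def
  have ht : 0 ≤ t := by positivity
  calc μ.real {ω | ε ≤ ∑ i ∈ s, Y i ω}
      = μ.real {ω | ε ≤ (∑ i ∈ s, Y i) ω} := by simp only [Finset.sum_apply]
    _ ≤ exp (-t * ε) * mgf (∑ i ∈ s, Y i) μ t :=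
        measure_ge_le_exp_mul_mgf ε ht <| integrable_exp_mul_sum_of_mem_Icc
          (fun i hi ↦ ((hY i hi).mono (ℱ.le i)).measurable.aemeasurable) hbd t
    _ ≤ exp (-t * ε) * exp (w * t ^ 2 * V / 8) := by
        gcongr
        exact mgf_sum_le_of_condExp_lag_nonpos hw hY hbd hcond ht
    _ = exp (-2 * ε ^ 2 / (w * V)) := by
        rw [← exp_add, ht_def]
        congr 1
        field_simp
        ring

end DependentHoeffding

theorem averaged_ipm_estimate_concentration_general
    {Ω : Type*} {m0 : MeasurableSpace Ω} (P : Measure Ω) [IsProbabilityMeasure P]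
    {n w : ℕ} (hn : n ≠ 0) (hw : w ≠ 0) (𝒦 : Filtration ℕ m0)
    (ρe : ℕ → Ω → ℝ) {a b ρ : ℝ} (hab : a < b)
    (hbd : ∀ i ∈ Icc 1 n, ∀ᵐ ω ∂P, ρe i ω ∈ Set.Icc a b)
    (hmeas : ∀ i ∈ Icc 1 n, StronglyMeasurable[𝒦 i] (ρe i))
    (hbias : ∀ i ∈ Icc 1 n, ∀ᵐ ω ∂P, ρ ≤ (P[ρe i | 𝒦 (i - w)]) ω)
    {t : ℝ} (ht : 0 ≤ t) :
    P.real {ω | (1 / (n : ℝ)) * ∑ i ∈ Icc 1 n, ρe i ω ≤ ρ - t} ≤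
      exp (-2 * n * t ^ 2 / (w * (b - a) ^ 2)) := by
  have hn_pos : (0 : ℝ) < n := by positivity
  have hlen : ∑ _i ∈ Icc 1 n, ((ρ - a) - (ρ - b)) ^ 2 = n * (b - a) ^ 2 := by
    simp only [sub_sub_sub_cancel_left, sum_const, Nat.card_Icc, Nat.add_sub_cancel, nsmul_eq_mul]
  have hevent (ω : Ω) : (1 / (n : ℝ)) * ∑ i ∈ Icc 1 n, ρe i ω ≤ ρ - t ↔
      n * t ≤ ∑ i ∈ Icc 1 n, (ρ - ρe i ω) := by
    rw [one_div, inv_mul_le_iff₀ hn_pos, sum_sub_distrib, sum_const, Nat.card_Icc,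
      Nat.add_sub_cancel, nsmul_eq_mul, mul_sub, le_sub_comm]
  have hdeficit (i : ℕ) (hi : i ∈ Icc 1 n) : P[fun ω ↦ ρ - ρe i ω | 𝒦 (i - w)] ≤ᵐ[P] 0 := by
    have hint : Integrable (ρe i) P :=
      .of_mem_Icc a b ((hmeas i hi).mono (𝒦.le i)).measurable.aemeasurable (hbd i hi)
    filter_upwards [condExp_sub (integrable_const ρ) hint (𝒦 (i - w)), hbias i hi] with ω hsub hω
    rw [condExp_const (𝒦.le _)] at hsub
    exact hsub.trans_le (sub_nonpos.2 hω)
  have hhoeffding := measureReal_sum_ge_le_of_condExp_lag_nonpos (μ := P) (ℱ := 𝒦)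
    (Y := fun i ω ↦ ρ - ρe i ω) (a := fun _ ↦ ρ - b) (b := fun _ ↦ ρ - a) hw
    (fun i hi ↦ stronglyMeasurable_const.sub (hmeas i hi))
    (fun i hi ↦ (hbd i hi).mono fun ω hω ↦ ⟨sub_le_sub_left hω.2 ρ, sub_le_sub_left hω.1 ρ⟩)
    hdeficit (hlen ▸ mul_pos hn_pos (pow_pos (sub_pos.2 hab) 2)) (mul_nonneg hn_pos.le ht)
  simp only [hevent]
  refine hhoeffding.trans_eq ?_
  rw [hlen]
  congr 1
  field_simp

/-- **Lemma 5, concentration of the averaged IPM estimates.**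
If the single-step estimates `ρ̃ᵢ` satisfy `0 ≤ ρ̃ᵢ ≤ D` a.s., are `𝓚ᵢ`-measurable, and are
upward biased two steps back, `E[ρ̃ᵢ | 𝓚_{i−2}] ≥ ρ` a.s. (with the convention `𝓚ᵢ = 𝓚₀` for
`i < 0`, realized by truncated subtraction on `ℕ`), then
`P{ (1/n) Σᵢ ρ̃ᵢ < ρ − t } ≤ exp(−n t² / (4D²))` for every `t > 0`. -/
theorem averaged_ipm_estimate_concentration
    {Ω : Type*} {m0 : MeasurableSpace Ω} (P : Measure Ω) [IsProbabilityMeasure P]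
    (n : ℕ) (hn : 1 ≤ n)
    (𝒦 : Filtration ℕ m0)
    (ρe : ℕ → Ω → ℝ) (D ρ : ℝ) (hD : 0 < D) (hρ : 0 ≤ ρ)
    (hbd : ∀ i ∈ Finset.Icc 1 n, ∀ᵐ ω ∂P, 0 ≤ ρe i ω ∧ ρe i ω ≤ D)
    (hmeas : ∀ i ∈ Finset.Icc 1 n, StronglyMeasurable[𝒦 i] (ρe i))
    (hint : ∀ i ∈ Finset.Icc 1 n, Integrable (ρe i) P)
    (hbias : ∀ i ∈ Finset.Icc 1 n, ∀ᵐ ω ∂P, ρ ≤ (P[ρe i|𝒦 (i - 2)]) ω)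
    (t : ℝ) (ht : 0 < t) :
    (P {ω | (1 / (n : ℝ)) * ∑ i ∈ Finset.Icc 1 n, ρe i ω < ρ - t}).toReal ≤
      Real.exp (-(n : ℝ) * t ^ 2 / (4 * D ^ 2)) := by
  calc P.real {ω | (1 / (n : ℝ)) * ∑ i ∈ Finset.Icc 1 n, ρe i ω < ρ - t}
      ≤ P.real {ω | (1 / (n : ℝ)) * ∑ i ∈ Finset.Icc 1 n, ρe i ω ≤ ρ - t} :=
        measureReal_mono fun _ hω ↦ le_of_lt (Set.mem_ofPred.1 hω)
    _ ≤ exp (-2 * n * t ^ 2 / ((2 : ℕ) * (D - 0) ^ 2)) :=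
        averaged_ipm_estimate_concentration_general P (Nat.one_le_iff_ne_zero.1 hn) two_ne_zero
          𝒦 ρe hD hbd hmeas hbias ht.le
    _ ≤ exp (-(n : ℝ) * t ^ 2 / (4 * D ^ 2)) := by
        rw [exp_le_exp, sub_zero, Nat.cast_ofNat, div_le_div_iff₀ (by positivity) (by positivity)]
        nlinarith [show 0 ≤ n * t ^ 2 * D ^ 2 by positivity]
end

section
/- Let (Ω, 𝓕, P) be a probability space with a filtration 𝓚₀ ⊆ 𝓚₁ ⊆ ⋯ ⊆ 𝓚ₙ (with the convention 𝓚ᵢ = 𝓚₀ for i < 0), let W ≥ 1 be an integer, and let ρ̃^{(2)}, …, ρ̃^{(n)} be random variables with 0 ≤ ρ̃^{(i)} ≤ D almost surely for a constant D > 0, each ρ̃^{(i)} being 𝓚ᵢ-measurable, and E[ρ̃^{(i)} | 𝓚_{i−W−1}] ≥ ρ almost surely for every i, where ρ ≥ 0. Then for every t > 0, P{ (1/(n−1)) Σ_{i=2}^n ρ̃^{(i)} < ρ − t } ≤ exp(−2(n−1) t² / ((W+1) D²)). -/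
open MeasureTheory

/-!
Hoeffding's lemma holds conditionally because on `[a, b]` an affine function, which commutes with
conditional expectation, fits between `exp (u * x)` and `exp (u * x + u ^ 2 * (b - a) ^ 2 / 8)`.
Hence, with lag `w`, each `exp (u * (rᵢ - Xᵢ) - u ^ 2 * (bᵢ - aᵢ) ^ 2 / 8)` has conditional mean at
most `1` given the information available `w` steps earlier. Indices in one residue class modulo `w`
are at least `w` apart, so peeling off the largest index first shows that the product over a class
has mean at most `1`. By convexity of `exp` the same holds for the geometric mean of the `w` class
products, and Chernoff's bound concludes.
-/

open ProbabilityTheory Finset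
open Real (exp exp_add exp_sum exp_nonneg exp_le_exp continuous_exp)

section HoeffdingLemma

lemma exp_chord_le (a b : ℝ) (p : unitInterval) (u : ℝ) :
    p * exp (u * b) + (1 - p) * exp (u * a) ≤
      exp (u * (p * b + (1 - p) * a) + u ^ 2 * (b - a) ^ 2 / 8) := by
  set mean : ℝ := p * b + (1 - p) * a
  have mem_uIcc : ∀ᵐ x ∂bernoulliMeasure b a p, x ∈ Set.uIcc a b :=
    (mem_ae_iff_prob_eq_one measurableSet_uIcc).2 <| bernoulliMeasure_apply_of_mem_of_mem p
      measurableSet_uIcc Set.right_mem_uIcc Set.left_mem_uIcc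
  have centered_le : p * exp (u * (b - mean)) + (1 - p) * exp (u * (a - mean)) ≤
      exp (u ^ 2 * (b - a) ^ 2 / 8) := by
    have := (hasSubgaussianMGF_of_mem_Icc aemeasurable_id mem_uIcc).mgf_le u
    simp only [mgf, integral_bernoulliMeasure, id_eq, smul_eq_mul] at this
    refine this.trans_eq (congrArg exp ?_)
    simp only [NNReal.coe_pow, NNReal.coe_div, coe_nnnorm, NNReal.coe_ofNat, div_pow,
      max_sub_min_eq_abs, Real.norm_eq_abs, sq_abs]
    ring
  calc p * exp (u * b) + (1 - p) * exp (u * a)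
      = exp (u * mean) * (p * exp (u * (b - mean)) + (1 - p) * exp (u * (a - mean))) := by
        simp only [mul_sub, Real.exp_sub]
        field_simp
    _ ≤ exp (u * mean) * exp (u ^ 2 * (b - a) ^ 2 / 8) :=
        mul_le_mul_of_nonneg_left centered_le (exp_nonneg _)
    _ = exp (u * mean + u ^ 2 * (b - a) ^ 2 / 8) := (exp_add _ _).symm

lemma exists_affine_between_exp (a b u : ℝ) :
    ∃ c d : ℝ, ∀ x ∈ Set.Icc a b,
      exp (u * x) ≤ c + d * x ∧ c + d * x ≤ exp (u * x + u ^ 2 * (b - a) ^ 2 / 8) := by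
  rcases lt_or_ge a b with hab | hba
  · have hpos : 0 < b - a := sub_pos.2 hab
    refine ⟨(b * exp (u * a) - a * exp (u * b)) / (b - a), (exp (u * b) - exp (u * a)) / (b - a),
      fun x hx ↦ ?_⟩
    let p : unitInterval := ⟨(x - a) / (b - a),
      div_nonneg (sub_nonneg.2 hx.1) hpos.le, (div_le_one hpos).2 (by linarith [hx.2])⟩
    have x_eq : p * b + (1 - p) * a = x := by
      simp only [p]; field_simp; ring
    have chord_eq : (b * exp (u * a) - a * exp (u * b)) / (b - a) +
        (exp (u * b) - exp (u * a)) / (b - a) * x = p * exp (u * b) + (1 - p) * exp (u * a) := by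
      simp only [p]; field_simp; ring
    rw [chord_eq]
    constructor
    · have convex_le := convexOn_exp.2 (Set.mem_univ (u * b)) (Set.mem_univ (u * a))
        p.2.1 (sub_nonneg.2 p.2.2) (add_sub_cancel _ _)
      calc exp (u * x) = exp (p * (u * b) + (1 - p) * (u * a)) := by rw [← x_eq]; ring_nf
        _ ≤ p * exp (u * b) + (1 - p) * exp (u * a) := convex_le
    · simpa only [x_eq] using exp_chord_le a b p u
  · refine ⟨exp (u * a), 0, fun x hx ↦ ?_⟩
    obtain rfl : x = a := le_antisymm (hx.2.trans hba) hx.1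
    rw [zero_mul, add_zero]
    exact ⟨le_rfl, exp_le_exp.2 (by linarith [show 0 ≤ u ^ 2 * (b - x) ^ 2 / 8 by positivity])⟩

variable {Ω : Type*} {m m0 : MeasurableSpace Ω} {μ : Measure Ω} [IsFiniteMeasure μ]
  {X : Ω → ℝ} {a b : ℝ}

lemma condExp_exp_mul_le_of_mem_Icc (hm : m ≤ m0) (hX : AEMeasurable X μ)
    (hXab : ∀ᵐ ω ∂μ, X ω ∈ Set.Icc a b) (u : ℝ) :
    μ[fun ω ↦ exp (u * X ω) | m] ≤ᵐ[μ]
      fun ω ↦ exp (u * (μ[X | m]) ω + u ^ 2 * (b - a) ^ 2 / 8) := by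
  obtain ⟨c, d, affine_bounds⟩ := exists_affine_between_exp a b u
  have hX_int : Integrable X μ := .of_mem_Icc a b hX hXab
  have exp_le : μ[fun ω ↦ exp (u * X ω) | m] ≤ᵐ[μ] μ[(fun _ ↦ c) + d • X | m] :=
    condExp_mono (integrable_exp_mul_of_mem_Icc hX hXab)
      ((integrable_const c).add (hX_int.smul d)) (hXab.mono fun ω hω ↦ (affine_bounds _ hω).1)
  have condExp_mem : ∀ᵐ ω ∂μ, (μ[X | m]) ω ∈ Set.Icc a b :=
    (convex_Icc a b).condExp_mem hm hX_int isClosed_Icc hXab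
  filter_upwards [exp_le, condExp_add (integrable_const c) (hX_int.smul d) m,
    condExp_smul d X m, condExp_mem] with ω h_exp_le h_add h_smul h_mem
  rw [h_add, Pi.add_apply, h_smul, condExp_const hm] at h_exp_le
  exact h_exp_le.trans (affine_bounds _ h_mem).2

lemma condExp_exp_mul_sub_le_one (hm : m ≤ m0) (hX : AEMeasurable X μ)
    (hXab : ∀ᵐ ω ∂μ, X ω ∈ Set.Icc a b) {r : ℝ} (hr : ∀ᵐ ω ∂μ, r ≤ (μ[X | m]) ω)
    {u : ℝ} (hu : 0 ≤ u) :
    μ[fun ω ↦ exp (u * (r - X ω) - u ^ 2 * (b - a) ^ 2 / 8) | m] ≤ᵐ[μ] 1 := by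
  set κ : ℝ := u * r - u ^ 2 * (b - a) ^ 2 / 8
  have factor : (fun ω ↦ exp (u * (r - X ω) - u ^ 2 * (b - a) ^ 2 / 8)) =
      exp κ • fun ω ↦ exp (-u * X ω) := by
    ext ω
    rw [Pi.smul_apply, smul_eq_mul, ← exp_add]
    congr 1
    ring
  rw [factor]
  filter_upwards [condExp_smul (μ := μ) (exp κ) (fun ω ↦ exp (-u * X ω)) m,
    condExp_exp_mul_le_of_mem_Icc hm hX hXab (-u), hr] with ω h_smul h_le h_r
  calc (μ[exp κ • fun ω ↦ exp (-u * X ω) | m]) ω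
      ≤ exp κ * exp (-u * (μ[X | m]) ω + (-u) ^ 2 * (b - a) ^ 2 / 8) := by
        rw [h_smul]
        exact mul_le_mul_of_nonneg_left h_le (exp_nonneg κ)
    _ = exp (u * (r - (μ[X | m]) ω)) := by rw [← exp_add]; simp only [κ]; ring_nf
    _ ≤ 1 := Real.exp_le_one_iff.2 (mul_nonpos_of_nonneg_of_nonpos hu (sub_nonpos.2 h_r))

end HoeffdingLemma

section ExponentialMoments

variable {Ω : Type*} {m0 : MeasurableSpace Ω} {μ : Measure Ω}

lemma integral_mul_le_of_condExp_le_one {m : MeasurableSpace Ω} (hm : m ≤ m0)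
    [SigmaFinite (μ.trim hm)] {F Z : Ω → ℝ} (hF : StronglyMeasurable[m] F) (hF0 : 0 ≤ᵐ[μ] F)
    (hF_int : Integrable F μ) (hZ_int : Integrable Z μ) (hFZ_int : Integrable (F * Z) μ)
    (hZ : μ[Z | m] ≤ᵐ[μ] 1) :
    ∫ ω, (F * Z) ω ∂μ ≤ ∫ ω, F ω ∂μ := by
  rw [← integral_condExp hm]
  refine integral_mono_ae integrable_condExp hF_int ?_
  filter_upwards [condExp_mul_of_stronglyMeasurable_left hF hFZ_int hZ_int, hZ, hF0]
    with ω h_pull h_le h_nonneg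
  rw [h_pull]
  exact mul_le_of_le_one_right h_nonneg h_le

lemma integral_prod_le_one_of_condExp_le_one [IsProbabilityMeasure μ] {ι : Type*} [LinearOrder ι]
    {𝒢 : ι → MeasurableSpace Ω} (h𝒢 : ∀ i, 𝒢 i ≤ m0) {Z : ι → Ω → ℝ} (S : Finset ι)
    (hZ0 : ∀ i ∈ S, 0 ≤ Z i) (hZ_bdd : ∀ i ∈ S, MemLp (Z i) ⊤ μ)
    (hZ_meas : ∀ i ∈ S, ∀ j ∈ S, i < j → StronglyMeasurable[𝒢 j] (Z i))
    (hZ : ∀ i ∈ S, μ[Z i | 𝒢 i] ≤ᵐ[μ] 1) :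
    ∫ ω, (∏ i ∈ S, Z i) ω ∂μ ≤ 1 := by
  induction S using Finset.induction_on_max with
  | empty => simp
  | insert k S hk ih =>
    simp only [forall_mem_insert] at hZ0 hZ_bdd hZ_meas hZ
    have prod_bdd : MemLp (∏ i ∈ S, Z i) ⊤ μ := by
      simpa using MemLp.prod hZ_bdd.2
    have prod_meas : StronglyMeasurable[𝒢 k] (∏ i ∈ S, Z i) :=
      S.stronglyMeasurable_prod fun i hi ↦ (hZ_meas.2 i hi).1 (hk i hi)
    rw [prod_insert fun hkS ↦ (hk k hkS).false, mul_comm]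
    calc ∫ ω, ((∏ i ∈ S, Z i) * Z k) ω ∂μ
        ≤ ∫ ω, (∏ i ∈ S, Z i) ω ∂μ :=
          integral_mul_le_of_condExp_le_one (h𝒢 k) prod_meas
            (.of_forall (prod_nonneg hZ0.2)) (prod_bdd.integrable le_top)
            (hZ_bdd.1.integrable le_top) ((hZ_bdd.1.mul prod_bdd).integrable le_top) hZ.1
      _ ≤ 1 := ih hZ0.2 hZ_bdd.2 (fun i hi ↦ (hZ_meas.2 i hi).2) hZ.2

lemma integral_exp_sum_mul_le_one {ι : Type*} {J : Finset ι} {p : ι → ℝ}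
    (hp0 : ∀ j ∈ J, 0 ≤ p j) (hp1 : ∑ j ∈ J, p j = 1) {Y : ι → Ω → ℝ}
    (hY_int : ∀ j ∈ J, Integrable (fun ω ↦ exp (Y j ω)) μ)
    (hY : ∀ j ∈ J, ∫ ω, exp (Y j ω) ∂μ ≤ 1) :
    ∫ ω, exp (∑ j ∈ J, p j * Y j ω) ∂μ ≤ 1 := by
  have hpY_int : ∀ j ∈ J, Integrable (fun ω ↦ p j * exp (Y j ω)) μ :=
    fun j hj ↦ (hY_int j hj).const_mul _
  calc ∫ ω, exp (∑ j ∈ J, p j * Y j ω) ∂μ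
      ≤ ∫ ω, ∑ j ∈ J, p j * exp (Y j ω) ∂μ :=
        integral_mono_of_nonneg (.of_forall fun _ ↦ exp_nonneg _) (integrable_finsetSum _ hpY_int)
          (.of_forall fun _ ↦ convexOn_exp.map_sum_le hp0 hp1 fun _ _ ↦ Set.mem_univ _)
    _ = ∑ j ∈ J, p j * ∫ ω, exp (Y j ω) ∂μ := by
        simp only [integral_finsetSum _ hpY_int, integral_const_mul]
    _ ≤ ∑ j ∈ J, p j :=
        sum_le_sum fun j hj ↦ mul_le_of_le_one_right (hp0 j hj) (hY j hj)
    _ = 1 := hp1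

end ExponentialMoments

section LaggedFiltration

variable {Ω : Type*} {m0 : MeasurableSpace Ω} {μ : Measure Ω} [IsProbabilityMeasure μ]
  {𝒦 : Filtration ℕ m0} {S : Finset ℕ} {w : ℕ}

lemma integral_exp_inv_mul_sum_le_one_of_lag (hw : 0 < w) {Y : ℕ → Ω → ℝ}
    (hY_meas : ∀ i ∈ S, StronglyMeasurable[𝒦 i] (Y i))
    (hY_bdd : ∀ i ∈ S, MemLp (fun ω ↦ exp (Y i ω)) ⊤ μ)
    (hY : ∀ i ∈ S, μ[fun ω ↦ exp (Y i ω) | 𝒦 (i - w)] ≤ᵐ[μ] 1) :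
    ∫ ω, exp ((w : ℝ)⁻¹ * ∑ i ∈ S, Y i ω) ∂μ ≤ 1 := by
  let residueClass (j : ℕ) : Finset ℕ := S.filter (· % w = j)
  have mem_S {j i : ℕ} (hi : i ∈ residueClass j) : i ∈ S := (mem_filter.1 hi).1
  have exp_class_sum (j : ℕ) : (fun ω ↦ exp (∑ i ∈ residueClass j, Y i ω)) =
      ∏ i ∈ residueClass j, fun ω ↦ exp (Y i ω) := by
    ext ω
    rw [exp_sum, Finset.prod_apply]
  have sum_classes (ω : Ω) :
      ∑ j ∈ range w, (w : ℝ)⁻¹ * ∑ i ∈ residueClass j, Y i ω = (w : ℝ)⁻¹ * ∑ i ∈ S, Y i ω := by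
    rw [← mul_sum, sum_fiberwise_of_maps_to fun i _ ↦ mem_range.2 (Nat.mod_lt i hw)]
  simp only [← sum_classes]
  refine integral_exp_sum_mul_le_one (fun _ _ ↦ by positivity) ?_ (fun j _ ↦ ?_) (fun j _ ↦ ?_)
  · rw [sum_const, card_range, nsmul_eq_mul, mul_inv_cancel₀ (by positivity)]
  · rw [exp_class_sum]
    exact MemLp.integrable le_top (by simpa using MemLp.prod fun i hi ↦ hY_bdd i (mem_S hi))
  · rw [exp_class_sum]
    refine integral_prod_le_one_of_condExp_le_one (𝒢 := fun i ↦ 𝒦 (i - w)) (fun _ ↦ 𝒦.le _) _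
      (fun _ _ _ ↦ exp_nonneg _) (fun i hi ↦ hY_bdd i (mem_S hi)) (fun i hi k hk hik ↦ ?_)
      (fun i hi ↦ hY i (mem_S hi))
    have hmod : i ≡ k [MOD w] := (mem_filter.1 hi).2.trans (mem_filter.1 hk).2.symm
    have i_le : i ≤ k - w := Nat.le_sub_of_add_le (hmod.add_le_of_lt hik)
    exact continuous_exp.comp_stronglyMeasurable ((hY_meas i (mem_S hi)).mono (𝒦.mono i_le))

variable {X : ℕ → Ω → ℝ} {a b r : ℕ → ℝ}

lemma mgf_sum_sub_le_of_lag (hw : 0 < w)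
    (hX_meas : ∀ i ∈ S, StronglyMeasurable[𝒦 i] (X i))
    (hXab : ∀ i ∈ S, ∀ᵐ ω ∂μ, X i ω ∈ Set.Icc (a i) (b i))
    (hr : ∀ i ∈ S, ∀ᵐ ω ∂μ, r i ≤ (μ[X i | 𝒦 (i - w)]) ω) {s : ℝ} (hs : 0 ≤ s) :
    mgf (fun ω ↦ ∑ i ∈ S, (r i - X i ω)) μ s ≤
      exp (w * (∑ i ∈ S, (b i - a i) ^ 2) * s ^ 2 / 8) := by
  set u : ℝ := w * s with hu
  have hu0 : 0 ≤ u := by positivity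
  let Y (i : ℕ) (ω : Ω) : ℝ := u * (r i - X i ω) - u ^ 2 * (b i - a i) ^ 2 / 8
  have Y_meas : ∀ i ∈ S, StronglyMeasurable[𝒦 i] (Y i) := fun i hi ↦
    ((stronglyMeasurable_const.sub (hX_meas i hi)).const_mul u).sub stronglyMeasurable_const
  have Y_bdd : ∀ i ∈ S, MemLp (fun ω ↦ exp (Y i ω)) ⊤ μ := by
    intro i hi
    refine memLp_top_of_bound (continuous_exp.comp_stronglyMeasurable
      ((Y_meas i hi).mono (𝒦.le i))).aestronglyMeasurable (exp (u * (r i - a i))) ?_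
    filter_upwards [hXab i hi] with ω hω
    rw [Real.norm_eq_abs, Real.abs_exp, exp_le_exp]
    calc Y i ω ≤ u * (r i - X i ω) := sub_le_self _ (by positivity)
      _ ≤ u * (r i - a i) := mul_le_mul_of_nonneg_left (sub_le_sub_left hω.1 _) hu0
  have integral_le_one : ∫ ω, exp ((w : ℝ)⁻¹ * ∑ i ∈ S, Y i ω) ∂μ ≤ 1 :=
    integral_exp_inv_mul_sum_le_one_of_lag hw Y_meas Y_bdd fun i hi ↦
      condExp_exp_mul_sub_le_one (𝒦.le _)
        ((hX_meas i hi).mono (𝒦.le i)).measurable.aemeasurable (hXab i hi) (hr i hi) hu0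
  have exponent_eq (ω : Ω) : s * ∑ i ∈ S, (r i - X i ω) =
      w * (∑ i ∈ S, (b i - a i) ^ 2) * s ^ 2 / 8 + (w : ℝ)⁻¹ * ∑ i ∈ S, Y i ω := by
    simp only [Y, sum_sub_distrib, ← mul_sum, ← sum_div, hu]
    field_simp
    ring
  simp only [mgf, exponent_eq, exp_add, integral_const_mul]
  exact mul_le_of_le_one_right (exp_nonneg _) integral_le_one

lemma measureReal_sum_le_sub_le_exp_of_lag (hw : 0 < w)
    (hX_meas : ∀ i ∈ S, StronglyMeasurable[𝒦 i] (X i))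
    (hXab : ∀ i ∈ S, ∀ᵐ ω ∂μ, X i ω ∈ Set.Icc (a i) (b i))
    (hab : 0 < ∑ i ∈ S, (b i - a i) ^ 2)
    (hr : ∀ i ∈ S, ∀ᵐ ω ∂μ, r i ≤ (μ[X i | 𝒦 (i - w)]) ω) {ε : ℝ} (hε : 0 ≤ ε) :
    μ.real {ω | ∑ i ∈ S, X i ω ≤ ∑ i ∈ S, r i - ε} ≤
      exp (-2 * ε ^ 2 / (w * ∑ i ∈ S, (b i - a i) ^ 2)) := by
  set V : ℝ := w * ∑ i ∈ S, (b i - a i) ^ 2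
  have hV0 : 0 < V := by positivity
  -- The minimizer of the Chernoff exponent `-s * ε + V * s ^ 2 / 8`.
  set s : ℝ := 4 * ε / V with hs
  have hs0 : 0 ≤ s := by positivity
  have sum_meas : AEMeasurable (fun ω ↦ ∑ i ∈ S, (r i - X i ω)) μ :=
    S.aemeasurable_fun_sum fun i hi ↦
      ((hX_meas i hi).mono (𝒦.le i)).measurable.aemeasurable.const_sub _
  have sum_mem : ∀ᵐ ω ∂μ, ∑ i ∈ S, (r i - X i ω) ∈
      Set.Icc (∑ i ∈ S, (r i - b i)) (∑ i ∈ S, (r i - a i)) := by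
    filter_upwards [(ae_ball_iff S.countable_toSet).2 hXab] with ω hω
    exact ⟨sum_le_sum fun i hi ↦ sub_le_sub_left (hω i hi).2 _,
      sum_le_sum fun i hi ↦ sub_le_sub_left (hω i hi).1 _⟩
  have event_eq : {ω | ∑ i ∈ S, X i ω ≤ ∑ i ∈ S, r i - ε} =
      {ω | ε ≤ ∑ i ∈ S, (r i - X i ω)} := by
    ext ω
    simp only [Set.mem_ofPred_eq, sum_sub_distrib]
    exact le_sub_comm
  calc μ.real {ω | ∑ i ∈ S, X i ω ≤ ∑ i ∈ S, r i - ε}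
      ≤ exp (-s * ε) * mgf (fun ω ↦ ∑ i ∈ S, (r i - X i ω)) μ s := by
        rw [event_eq]
        exact measure_ge_le_exp_mul_mgf ε hs0 (integrable_exp_mul_of_mem_Icc sum_meas sum_mem)
    _ ≤ exp (-s * ε) * exp (V * s ^ 2 / 8) := by
        gcongr
        exact mgf_sum_sub_le_of_lag hw hX_meas hXab hr hs0
    _ = exp (-2 * ε ^ 2 / V) := by
        rw [← exp_add, hs]
        congr 1
        field_simp
        ring

end LaggedFiltration

/-- **Lemma 6, concentration of windowed estimates, bounded-change case.**
If the windowed estimates `ρ̃^{(i)}` (for `i = 2, …, n`) satisfy `0 ≤ ρ̃^{(i)} ≤ D` a.s., are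
`𝓚ᵢ`-measurable, and are upward biased `W+1` steps back, `E[ρ̃^{(i)} | 𝓚_{i−W−1}] ≥ ρ` a.s.
(with the convention `𝓚ᵢ = 𝓚₀` for `i < 0`, realized by truncated subtraction on `ℕ`), then
`P{ (1/(n−1)) Σ_{i=2}^n ρ̃^{(i)} < ρ − t } ≤ exp(−2(n−1) t² / ((W+1) D²))` for every `t > 0`. -/
theorem averaged_windowed_ipm_estimate_concentration
    {Ω : Type*} {m0 : MeasurableSpace Ω} (P : Measure Ω) [IsProbabilityMeasure P]
    (n : ℕ) (hn : 2 ≤ n) (W : ℕ) (hW : 1 ≤ W)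
    (𝒦 : Filtration ℕ m0)
    (ρe : ℕ → Ω → ℝ) (D ρ : ℝ) (hD : 0 < D) (hρ : 0 ≤ ρ)
    (hbd : ∀ i ∈ Finset.Icc 2 n, ∀ᵐ ω ∂P, 0 ≤ ρe i ω ∧ ρe i ω ≤ D)
    (hmeas : ∀ i ∈ Finset.Icc 2 n, StronglyMeasurable[𝒦 i] (ρe i))
    (hint : ∀ i ∈ Finset.Icc 2 n, Integrable (ρe i) P)
    (hbias : ∀ i ∈ Finset.Icc 2 n, ∀ᵐ ω ∂P, ρ ≤ (P[ρe i|𝒦 (i - (W + 1))]) ω)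
    (t : ℝ) (ht : 0 < t) :
    (P {ω | (1 / ((n : ℝ) - 1)) * ∑ i ∈ Finset.Icc 2 n, ρe i ω < ρ - t}).toReal ≤
      Real.exp (-2 * ((n : ℝ) - 1) * t ^ 2 / ((W + 1) * D ^ 2)) := by
  have hn1 : (0 : ℝ) < n - 1 := sub_pos.2 (by exact_mod_cast hn)
  have card_eq : ((Finset.Icc 2 n).card : ℝ) = n - 1 := by
    rw [Nat.card_Icc, Nat.cast_sub (by omega)]
    push_cast
    ring
  have tail_bound := measureReal_sum_le_sub_le_exp_of_lag (μ := P) (S := Finset.Icc 2 n)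
    (a := fun _ ↦ 0) (b := fun _ ↦ D) (r := fun _ ↦ ρ) W.succ_pos hmeas hbd
    (by simpa only [sum_const, nsmul_eq_mul, card_eq, sub_zero] using mul_pos hn1 (pow_pos hD 2))
    hbias (mul_pos hn1 ht).le
  simp only [sum_const, nsmul_eq_mul, card_eq, sub_zero] at tail_bound
  calc P.real {ω | 1 / ((n : ℝ) - 1) * ∑ i ∈ Finset.Icc 2 n, ρe i ω < ρ - t}
      ≤ P.real {ω | ∑ i ∈ Finset.Icc 2 n, ρe i ω ≤ (n - 1) * ρ - (n - 1) * t} := by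
        refine measureReal_mono fun ω hω ↦ ?_
        rw [Set.mem_ofPred_eq, one_div, inv_mul_lt_iff₀ hn1, mul_sub] at hω
        exact hω.le
    _ ≤ exp (-2 * ((n - 1) * t) ^ 2 / ((W + 1 : ℕ) * ((n - 1) * D ^ 2))) := tail_bound
    _ = exp (-2 * ((n : ℝ) - 1) * t ^ 2 / ((W + 1) * D ^ 2)) := by
        push_cast
        field_simp
end

section
/- Fix constants m > 0, ρ > 0, α > 0, and β ≥ 0, and define φ : [0, ∞) → ℝ by φ(v) = α(√(2v/m) + ρ)² + β. Suppose there exists ε > 0 with φ(ε) ≤ ε. Then: (i) 2α/m < 1; (ii) φ has a unique positive fixed point v̄ (i.e., a unique v̄ > 0 with φ(v̄) = v̄); (iii) v̄ ≤ ε; and (iv) the derivative satisfies φ′(v̄) < 1. -/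
/-!
The map `φ` is concave on `[0, ∞)`: expanding the square writes it as a linear function plus a
nonnegative multiple of `√v` plus a constant. Moreover `φ 0 > 0`. A concave function that starts
above the diagonal and meets it at a point `v` lies strictly below it after `v`, and its slope at
`v` is at most that of the chord from the starting point, hence smaller than `1`. Existence comes
from the intermediate value theorem on `[0, ε]`, and the bound `2α/m < 1` from comparing
`φ ε ≤ ε` with the linear part of `φ`.
-/

open Set

section ConcaveFixedPoint

theorem le_of_concaveOn_of_le_map_of_map_le {𝕜 : Type*} [Field 𝕜] [LinearOrder 𝕜]
    [IsStrictOrderedRing 𝕜] {s : Set 𝕜} {f : 𝕜 → 𝕜} {a v w : 𝕜} (hf : ConcaveOn 𝕜 s f)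
    (has : a ∈ s) (hws : w ∈ s) (ha : a < f a) (hw : w ≤ f w) (hav : a ≤ v) (hv : f v ≤ v) :
    w ≤ v := by
  by_contra! hvw
  have hav' : a < v := hav.lt_of_ne (by rintro rfl; exact hv.not_gt ha)
  have hgap : ConcaveOn 𝕜 s (f - id) := hf.sub (convexOn_id hf.1)
  have hmem : v ∈ openSegment 𝕜 a w := by
    rw [openSegment_eq_Ioo (hav'.trans hvw)]
    exact ⟨hav', hvw⟩
  have hgap_lt : f w - w < f v - v :=
    hgap.lt_right_of_left_lt has hws hmem ((sub_nonpos.2 hv).trans_lt (sub_pos.2 ha))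
  linarith

variable {f : ℝ → ℝ} {a b v : ℝ}

theorem existsUnique_fixedPoint_of_concaveOn (hf : ConcaveOn ℝ (Ici a) f)
    (hcont : ContinuousOn f (Icc a b)) (hab : a ≤ b) (ha : a < f a) (hb : f b ≤ b) :
    ∃! v, a < v ∧ f v = v := by
  obtain ⟨v, ⟨hav, -⟩, hv : f v = v⟩ := exists_mem_Icc_isFixedPt hcont hab ha.le hb
  have hav' : a < v := hav.lt_of_ne (by rintro rfl; exact ha.ne' hv)
  refine ⟨v, ⟨hav', hv⟩, fun w ⟨haw, hw⟩ => le_antisymm ?_ ?_⟩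
  · exact le_of_concaveOn_of_le_map_of_map_le hf self_mem_Ici haw.le ha hw.ge hav hv.le
  · exact le_of_concaveOn_of_le_map_of_map_le hf self_mem_Ici hav ha hv.ge haw.le hw.le

theorem deriv_lt_one_of_concaveOn_of_map_eq {s : Set ℝ} (hf : ConcaveOn ℝ s f) (has : a ∈ s)
    (hvs : v ∈ s) (ha : a < f a) (hav : a < v) (hv : f v = v) (hdiff : DifferentiableAt ℝ f v) :
    deriv f v < 1 :=
  calc
    deriv f v ≤ slope f a v := hf.deriv_le_slope has hvs hav hdiff
    _ = (v - f a) / (v - a) := by rw [slope_def_field, hv]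
    _ < 1 := by
      rw [div_lt_one (sub_pos.2 hav)]
      linarith

end ConcaveFixedPoint

/-- The one-step map `φ(v) = α(√(2v/m) + ρ)² + β` bounding the evolution of the mean gap, as a
function on all of `ℝ`; it is meaningful for `v ≥ 0`, and constant for `v ≤ 0` when `m > 0`. -/
noncomputable def meanGapMap (m ρ α β v : ℝ) : ℝ :=
  α * (√(2 * v / m) + ρ) ^ 2 + β

section MeanGapMap

variable {m ρ α β v : ℝ}

theorem meanGapMap_zero : meanGapMap m ρ α β 0 = α * ρ ^ 2 + β := by
  simp [meanGapMap]

theorem meanGapMap_eq_add_sqrt (hm : 0 ≤ m) (hv : 0 ≤ v) :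
    meanGapMap m ρ α β v =
      2 * α / m * v + 2 * α * ρ * √(2 / m) * √v + (α * ρ ^ 2 + β) := by
  have hsqrt : √(2 * v / m) = √(2 / m) * √v := by
    rw [← Real.sqrt_mul (by positivity), div_mul_eq_mul_div]
  have hcoeff : √(2 / m) ^ 2 = 2 / m := Real.sq_sqrt (by positivity)
  have hvar : √v ^ 2 = v := Real.sq_sqrt hv
  calc
    meanGapMap m ρ α β v = α * (√(2 / m) * √v + ρ) ^ 2 + β := by rw [meanGapMap, hsqrt]
    _ = α * (√(2 / m) ^ 2 * √v ^ 2) + 2 * α * ρ * √(2 / m) * √v + (α * ρ ^ 2 + β) := by ring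
    _ = 2 * α / m * v + 2 * α * ρ * √(2 / m) * √v + (α * ρ ^ 2 + β) := by
      rw [hcoeff, hvar]
      ring

theorem concaveOn_meanGapMap (hm : 0 ≤ m) (hρ : 0 ≤ ρ) (hα : 0 ≤ α) :
    ConcaveOn ℝ (Ici 0) (meanGapMap m ρ α β) := by
  have hlinear : ConcaveOn ℝ (Ici 0) fun v : ℝ => 2 * α / m * v :=
    (concaveOn_id (convex_Ici 0)).smul (by positivity)
  have hsqrt : ConcaveOn ℝ (Ici 0) fun v => 2 * α * ρ * √(2 / m) * √v :=
    Real.strictConcaveOn_sqrt.concaveOn.smul (by positivity)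
  exact ((hlinear.add hsqrt).add_const (α * ρ ^ 2 + β)).congr
    fun v hv => (meanGapMap_eq_add_sqrt hm hv).symm

theorem continuous_meanGapMap : Continuous (meanGapMap m ρ α β) := by
  unfold meanGapMap
  fun_prop

theorem differentiableAt_meanGapMap (hm : m ≠ 0) (hv : v ≠ 0) :
    DifferentiableAt ℝ (meanGapMap m ρ α β) v := by
  have harg : 2 * v / m ≠ 0 := by positivity
  unfold meanGapMap
  fun_prop (disch := exact harg)

theorem two_mul_div_mul_lt_meanGapMap (hm : 0 ≤ m) (hρ : 0 < ρ) (hα : 0 < α) (hβ : 0 ≤ β)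
    (hv : 0 ≤ v) : 2 * α / m * v < meanGapMap m ρ α β v := by
  rw [meanGapMap_eq_add_sqrt hm hv, add_assoc]
  exact lt_add_of_pos_right _ (by positivity)

end MeanGapMap

/-- **fixed-point lemma, Lemma 7.** For `φ(v) = α(√(2v/m) + ρ)² + β`, if
`φ(ε) ≤ ε` for some `ε > 0`, then `2α/m < 1`, `φ` has a unique positive fixed point `v̄`,
and every positive fixed point `v̄` satisfies `v̄ ≤ ε` and `φ′(v̄) < 1`. -/
theorem mean_gap_map_fixed_point
    (m ρ α β ε : ℝ) (hm : 0 < m) (hρ : 0 < ρ) (hα : 0 < α) (hβ : 0 ≤ β) (hε : 0 < ε)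
    (φ : ℝ → ℝ)
    (hφ : ∀ v : ℝ, φ v = α * (Real.sqrt (2 * v / m) + ρ) ^ 2 + β)
    (hfix : φ ε ≤ ε) :
    2 * α / m < 1 ∧
      (∃! v : ℝ, 0 < v ∧ φ v = v) ∧
      (∀ v : ℝ, 0 < v → φ v = v → v ≤ ε ∧ deriv φ v < 1) := by
  obtain rfl : φ = meanGapMap m ρ α β := funext hφ
  have hconc : ConcaveOn ℝ (Ici 0) (meanGapMap m ρ α β) :=
    concaveOn_meanGapMap hm.le hρ.le hα.le
  have hzero : 0 < meanGapMap m ρ α β 0 := by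
    rw [meanGapMap_zero]
    positivity
  refine ⟨?_, ?_, fun v hv hvfix => ⟨?_, ?_⟩⟩
  · have hlt : 2 * α / m * ε < ε :=
      (two_mul_div_mul_lt_meanGapMap hm.le hρ hα hβ hε.le).trans_le hfix
    exact (mul_lt_iff_lt_one_left hε).1 hlt
  · exact existsUnique_fixedPoint_of_concaveOn hconc continuous_meanGapMap.continuousOn hε.le
      hzero hfix
  · exact le_of_concaveOn_of_le_map_of_map_le hconc self_mem_Ici hv.le hzero hvfix.ge hε.le hfix
  · exact deriv_lt_one_of_concaveOn_of_map_eq hconc self_mem_Ici hv.le hzero hv hvfix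
      (differentiableAt_meanGapMap hm.ne' hv.ne')
end

section
/- Fix constants m > 0, ρ > 0, α > 0, and β ≥ 0, define φ : [0, ∞) → ℝ by φ(v) = α(√(2v/m) + ρ)² + β, and suppose there exists ε > 0 with φ(ε) ≤ ε. Let (Ω, 𝓕, P) be a probability space and let (Xₙ)_{n≥1} be random variables with 0 ≤ Xₙ ≤ C almost surely for a constant C, such that almost surely there exists a (random) index N with Xₙ ≤ φ(X_{n−1}) for all n ≥ N. Then limsup_{n→∞} E[Xₙ] ≤ ε. -/
open MeasureTheory Filter

/-!
A nondecreasing concave `f` on `[a, ∞)` with `a < f a` and `f ε ≤ ε` starts above the diagonal and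
is no longer above it at `ε`, so its secant over `[a, ε]` has slope `κ < 1`. Beyond `ε` concavity
keeps `f` below that secant, hence the recursion contracts the excess `(Xₙ - ε)⁺` by the factor
`κ`. The excess thus tends to zero almost surely, and by dominated convergence also in mean.
-/

open Set Topology

section ConcaveRecursion

variable {f : ℝ → ℝ} {a ε : ℝ}

lemma slope_lt_one_of_lt_of_le (haε : a < ε) (hfa : a < f a) (hfε : f ε ≤ ε) :
    slope f a ε < 1 := by
  rw [slope_def_field, div_lt_one (sub_pos.2 haε)]
  linarith

lemma le_add_slope_mul_sub_of_concaveOn {s : Set ℝ} {x : ℝ} (hf : ConcaveOn ℝ s f) (ha : a ∈ s)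
    (hx : x ∈ s) (haε : a < ε) (hεx : ε ≤ x) : f x ≤ f ε + slope f a ε * (x - ε) := by
  rcases hεx.eq_or_lt with rfl | hεx
  · simp
  · have hslope := hf.slope_anti_adjacent ha hx haε hεx
    rw [div_le_iff₀ (sub_pos.2 hεx), ← slope_def_field] at hslope
    linarith

lemma posPart_sub_le_slope_mul_posPart_sub {x : ℝ} (hmono : MonotoneOn f (Ici a))
    (hconc : ConcaveOn ℝ (Ici a) f) (haε : a < ε) (hfε : f ε ≤ ε) (hx : a ≤ x) :
    (f x - ε)⁺ ≤ slope f a ε * (x - ε)⁺ := by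
  have hslope : 0 ≤ slope f a ε := hmono.slope_nonneg self_mem_Ici haε.le
  rcases le_total x ε with hxε | hεx
  · have hfx : f x ≤ ε := (hmono hx haε.le hxε).trans hfε
    simp [posPart_eq_zero.2 (sub_nonpos.2 hfx), posPart_eq_zero.2 (sub_nonpos.2 hxε)]
  · have hsecant := le_add_slope_mul_sub_of_concaveOn hconc self_mem_Ici hx haε hεx
    rw [posPart_eq_self.2 (sub_nonneg.2 hεx)]
    exact sup_le (by linarith) (mul_nonneg hslope (sub_nonneg.2 hεx))

lemma tendsto_posPart_sub_of_eventually_le_concaveOn {u : ℕ → ℝ} (hmono : MonotoneOn f (Ici a))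
    (hconc : ConcaveOn ℝ (Ici a) f) (haε : a < ε) (hfa : a < f a) (hfε : f ε ≤ ε)
    (hu : ∀ᶠ n in atTop, a ≤ u n) (hrec : ∀ᶠ n in atTop, u (n + 1) ≤ f (u n)) :
    Tendsto (fun n => (u n - ε)⁺) atTop (𝓝 0) := by
  refine (summable_of_ratio_norm_eventually_le (slope_lt_one_of_lt_of_le haε hfa hfε)
    ?_).tendsto_atTop_zero
  filter_upwards [hu, hrec] with n hun hrecn
  simp only [Real.norm_of_nonneg (posPart_nonneg _)]
  calc (u (n + 1) - ε)⁺ ≤ (f (u n) - ε)⁺ := posPart_mono (sub_le_sub_right hrecn ε)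
    _ ≤ slope f a ε * (u n - ε)⁺ :=
      posPart_sub_le_slope_mul_posPart_sub hmono hconc haε hfε hun

end ConcaveRecursion

section ReverseFatou

variable {Ω ι : Type*} [MeasurableSpace Ω] {μ : Measure Ω} {l : Filter ι}
  {X : ι → Ω → ℝ} {g bound : Ω → ℝ}

lemma tendsto_integral_posPart_sub [l.IsCountablyGenerated]
    (hX : ∀ᶠ i in l, AEStronglyMeasurable (X i) μ)
    (hXbound : ∀ᶠ i in l, ∀ᵐ ω ∂μ, ‖X i ω‖ ≤ bound ω) (hbound : Integrable bound μ)
    (hg : Integrable g μ) (hlim : ∀ᵐ ω ∂μ, Tendsto (fun i => (X i ω - g ω)⁺) l (𝓝 0)) :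
    Tendsto (fun i => ∫ ω, (X i ω - g ω)⁺ ∂μ) l (𝓝 0) := by
  rw [← integral_zero Ω ℝ (μ := μ)]
  refine tendsto_integral_filter_of_dominated_convergence (fun ω => bound ω + ‖g ω‖) ?_ ?_
    (hbound.add hg.norm) hlim
  · filter_upwards [hX] with i hXi
    exact (hXi.sub hg.aestronglyMeasurable).sup aestronglyMeasurable_const
  · filter_upwards [hXbound] with i hXi
    filter_upwards [hXi] with ω hω
    calc ‖(X i ω - g ω)⁺‖ = (X i ω - g ω)⁺ := Real.norm_of_nonneg (posPart_nonneg _)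
      _ ≤ ‖X i ω - g ω‖ := sup_le (Real.le_norm_self _) (norm_nonneg _)
      _ ≤ ‖X i ω‖ + ‖g ω‖ := norm_sub_le _ _
      _ ≤ bound ω + ‖g ω‖ := by gcongr

lemma integral_le_integral_add_integral_posPart_sub {Y : Ω → ℝ} (hY : Integrable Y μ)
    (hg : Integrable g μ) : ∫ ω, Y ω ∂μ ≤ ∫ ω, g ω ∂μ + ∫ ω, (Y ω - g ω)⁺ ∂μ := by
  have hexcess : Integrable (fun ω => (Y ω - g ω)⁺) μ := (hY.sub hg).pos_part
  rw [← integral_add hg hexcess]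
  exact integral_mono hY (hg.add hexcess) fun ω => sub_le_iff_le_add'.1 (le_posPart _)

lemma limsup_integral_le_of_tendsto_posPart_sub [l.NeBot] [l.IsCountablyGenerated]
    (hX : ∀ᶠ i in l, AEStronglyMeasurable (X i) μ)
    (hXbound : ∀ᶠ i in l, ∀ᵐ ω ∂μ, ‖X i ω‖ ≤ bound ω) (hbound : Integrable bound μ)
    (hg : Integrable g μ) (hlim : ∀ᵐ ω ∂μ, Tendsto (fun i => (X i ω - g ω)⁺) l (𝓝 0)) :
    limsup (fun i => ∫ ω, X i ω ∂μ) l ≤ ∫ ω, g ω ∂μ := by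
  have hupper : Tendsto (fun i => ∫ ω, g ω ∂μ + ∫ ω, (X i ω - g ω)⁺ ∂μ) l (𝓝 (∫ ω, g ω ∂μ)) := by
    simpa using (tendsto_integral_posPart_sub hX hXbound hbound hg hlim).const_add (∫ ω, g ω ∂μ)
  have hle : ∀ᶠ i in l, ∫ ω, X i ω ∂μ ≤ ∫ ω, g ω ∂μ + ∫ ω, (X i ω - g ω)⁺ ∂μ := by
    filter_upwards [hX, hXbound] with i hXi hXib
    exact integral_le_integral_add_integral_posPart_sub (hbound.mono' hXi hXib) hg
  have hlower : ∀ᶠ i in l, -∫ ω, bound ω ∂μ ≤ ∫ ω, X i ω ∂μ := by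
    filter_upwards [hXbound] with i hXib
    exact neg_le_of_abs_le (norm_integral_le_of_norm_le hbound hXib)
  rw [← hupper.limsup_eq]
  exact limsup_le_limsup hle (isCoboundedUnder_le_of_eventually_le l hlower)
    hupper.isBoundedUnder_le

end ReverseFatou

section SqrtMap

variable {α β ρ c m : ℝ}

lemma concaveOn_sqrt_add_sq (hρ : 0 ≤ ρ) : ConcaveOn ℝ (Ici 0) fun x : ℝ => (√x + ρ) ^ 2 := by
  have hexpand : ConcaveOn ℝ (Ici 0) fun x : ℝ => x + (2 * ρ) • √x + ρ ^ 2 :=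
    ((concaveOn_id (convex_Ici 0)).add
      (Real.strictConcaveOn_sqrt.concaveOn.smul (by positivity))).add_const _
  refine hexpand.congr fun x hx => ?_
  simp only [add_sq, Real.sq_sqrt hx, smul_eq_mul]
  ring

lemma concaveOn_mul_sqrt_add_sq_add (hα : 0 ≤ α) (hρ : 0 ≤ ρ) (hc : 0 ≤ c) (hm : 0 ≤ m) :
    ConcaveOn ℝ (Ici 0) fun v : ℝ => α * (√(c * v / m) + ρ) ^ 2 + β := by
  have hscaled := ((concaveOn_sqrt_add_sq hρ).comp_linearMap (LinearMap.mul ℝ ℝ (c / m))).subset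
    (fun v (hv : 0 ≤ v) => mul_nonneg (div_nonneg hc hm) hv) (convex_Ici 0)
  refine ((hscaled.smul hα).add_const β).congr fun v _ => ?_
  simp [mul_div_right_comm]

lemma monotone_mul_sqrt_add_sq_add (hα : 0 ≤ α) (hρ : 0 ≤ ρ) (hc : 0 ≤ c) (hm : 0 ≤ m) :
    Monotone fun v : ℝ => α * (√(c * v / m) + ρ) ^ 2 + β := by
  intro v w hvw
  dsimp only
  gcongr

end SqrtMap

theorem eventually_recursion_limsup_expectation_le_general {f : ℝ → ℝ} {a ε : ℝ}
    (hmono : MonotoneOn f (Ici a)) (hconc : ConcaveOn ℝ (Ici a) f) (haε : a < ε)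
    (hfa : a < f a) (hfε : f ε ≤ ε)
    {Ω : Type*} [MeasurableSpace Ω] {P : Measure Ω} [IsProbabilityMeasure P]
    {X : ℕ → Ω → ℝ} {Y : Ω → ℝ} (hX : ∀ n, AEStronglyMeasurable (X n) P) (hY : Integrable Y P)
    (hbd : ∀ n, ∀ᵐ ω ∂P, a ≤ X n ω ∧ X n ω ≤ Y ω)
    (hrec : ∀ᵐ ω ∂P, ∀ᶠ n in atTop, X (n + 1) ω ≤ f (X n ω)) :
    limsup (fun n => ∫ ω, X n ω ∂P) atTop ≤ ε := by
  have hnorm : ∀ n, ∀ᵐ ω ∂P, ‖X n ω‖ ≤ max |a| |Y ω| := fun n =>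
    (hbd n).mono fun ω hω => abs_le_max_abs_abs hω.1 hω.2
  have hexcess : ∀ᵐ ω ∂P, Tendsto (fun n => (X n ω - ε)⁺) atTop (𝓝 0) := by
    filter_upwards [ae_all_iff.2 hbd, hrec] with ω hω hrecω
    exact tendsto_posPart_sub_of_eventually_le_concaveOn hmono hconc haε hfa hfε
      (.of_forall fun n => (hω n).1) hrecω
  simpa using limsup_integral_le_of_tendsto_posPart_sub (.of_forall hX) (.of_forall hnorm)
    ((integrable_const |a|).sup hY.abs) (integrable_const ε) hexcess

/-- **mean-gap control, Theorem of Section 4.** For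
`φ(v) = α(√(2v/m) + ρ)² + β` with `φ(ε) ≤ ε` for some `ε > 0`, if the random variables
`Xₙ` are uniformly bounded in `[0, C]` a.s. and almost surely eventually satisfy the
recursion `X_{n+1} ≤ φ(Xₙ)` (from some random index on), then
`limsup_{n→∞} E[Xₙ] ≤ ε`. -/
theorem eventually_recursion_limsup_expectation_le
    (m ρ α β ε : ℝ) (hm : 0 < m) (hρ : 0 < ρ) (hα : 0 < α) (hβ : 0 ≤ β) (hε : 0 < ε)
    (φ : ℝ → ℝ)
    (hφ : ∀ v : ℝ, φ v = α * (Real.sqrt (2 * v / m) + ρ) ^ 2 + β)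
    (hfix : φ ε ≤ ε)
    {Ω : Type*} [MeasurableSpace Ω] (P : Measure Ω) [IsProbabilityMeasure P]
    (X : ℕ → Ω → ℝ) (C : ℝ)
    (hint : ∀ n, Integrable (X n) P)
    (hbd : ∀ n, ∀ᵐ ω ∂P, 0 ≤ X n ω ∧ X n ω ≤ C)
    (hrec : ∀ᵐ ω ∂P, ∃ N : ℕ, ∀ n : ℕ, N ≤ n → X (n + 1) ω ≤ φ (X n ω)) :
    limsup (fun n => ∫ ω, X n ω ∂P) atTop ≤ ε := by
  obtain rfl : φ = fun v => α * (√(2 * v / m) + ρ) ^ 2 + β := funext hφ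
  exact eventually_recursion_limsup_expectation_le_general
    ((monotone_mul_sqrt_add_sq_add hα.le hρ.le zero_le_two hm.le).monotoneOn _)
    (concaveOn_mul_sqrt_add_sq_add hα.le hρ.le zero_le_two hm.le) hε (by positivity) hfix
    (fun n => (hint n).aestronglyMeasurable) (integrable_const C) hbd
    (hrec.mono fun _ => eventually_atTop.2)
end

section
/- Let H be a real Hilbert space, C ⊆ H a nonempty closed convex set, and f : H → ℝ differentiable and m-strongly convex for some m > 0, and let x* be the minimizer of f over C (so that ⟨∇f(x*), y − x*⟩ ≥ 0 for all y ∈ C). Fix x ∈ C and μ > 0, and let g be a random vector in H with E[g] = ∇f(x) and E[‖g‖²] ≤ A + B‖x − x*‖² for constants A ≥ 0 and B ≥ 0. Let x⁺ = Π_C(x − μ g), where Π_C denotes the metric projection onto C. Then E[‖x⁺ − x*‖²] ≤ (1 − 2mμ + Bμ²)‖x − x*‖² + Aμ². -/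
open MeasureTheory
open scoped RealInnerProductSpace

/-!
By the obtuse-angle inequality, projecting onto `C` does not increase the distance to any point of
`C`, so the new squared distance to `x*` is at most that of the unprojected step. Expanding the
latter, its cross term has mean `-2μ⟪x - x*, ∇f(x)⟫`. Adding the strong convexity inequalities at
`x` and `x*`, and using the variational inequality at `x*`, bounds this by `-2μm‖x - x*‖²`.
-/

section InnerProductSpace

variable {H : Type*} [NormedAddCommGroup H] [InnerProductSpace ℝ H]

theorem norm_sub_sq_le_of_inner_sub_sub_nonpos {u p y : H} (h : ⟪u - p, y - p⟫ ≤ 0) :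
    ‖p - y‖ ^ 2 ≤ ‖u - y‖ ^ 2 := by
  have cross_nonneg : 0 ≤ ⟪u - p, p - y⟫ := by
    rw [← neg_sub y p, inner_neg_right]
    exact neg_nonneg.mpr h
  calc
    ‖p - y‖ ^ 2 ≤ ‖u - p‖ ^ 2 + 2 * ⟪u - p, p - y⟫ + ‖p - y‖ ^ 2 :=
      le_add_of_nonneg_left (by positivity)
    _ = ‖u - y‖ ^ 2 := by rw [← norm_add_sq_real, sub_add_sub_cancel]

theorem norm_sub_smul_sq_real (a v : H) (t : ℝ) :
    ‖a - t • v‖ ^ 2 = ‖a‖ ^ 2 - 2 * t * ⟪a, v⟫ + t ^ 2 * ‖v‖ ^ 2 := by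
  rw [norm_sub_sq_real, real_inner_smul_right, norm_smul, mul_pow, Real.norm_eq_abs, sq_abs,
    mul_assoc]

theorem mul_norm_sub_sq_le_inner_sub_of_quadratic_lower_bounds {f : H → ℝ} {m : ℝ} {x y u v : H}
    (hx : f x + ⟪u, y - x⟫ + m / 2 * ‖y - x‖ ^ 2 ≤ f y)
    (hy : f y + ⟪v, x - y⟫ + m / 2 * ‖x - y‖ ^ 2 ≤ f x) :
    m * ‖x - y‖ ^ 2 ≤ ⟪u - v, x - y⟫ := by
  rw [← neg_sub x y, inner_neg_right, norm_neg] at hx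
  rw [inner_sub_left]
  linarith

theorem mul_norm_sub_sq_le_inner_of_variational_inequality {f : H → ℝ} {m : ℝ} {x z u v : H}
    (hx : f x + ⟪u, z - x⟫ + m / 2 * ‖z - x‖ ^ 2 ≤ f z)
    (hz : f z + ⟪v, x - z⟫ + m / 2 * ‖x - z‖ ^ 2 ≤ f x) (hVI : 0 ≤ ⟪v, x - z⟫) :
    m * ‖x - z‖ ^ 2 ≤ ⟪x - z, u⟫ := by
  have monotone := mul_norm_sub_sq_le_inner_sub_of_quadratic_lower_bounds hx hz
  rw [inner_sub_left] at monotone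
  rw [real_inner_comm]
  linarith

theorem integral_norm_sub_smul_sq {Ω : Type*} [MeasurableSpace Ω] {P : Measure Ω}
    [IsProbabilityMeasure P] {g : Ω → H} (hg : MemLp g 2 P) (a : H) (t : ℝ) :
    ∫ ω, ‖a - t • g ω‖ ^ 2 ∂P =
      ‖a‖ ^ 2 - 2 * t * ∫ ω, ⟪a, g ω⟫ ∂P + t ^ 2 * ∫ ω, ‖g ω‖ ^ 2 ∂P := by
  have cross_integrable : Integrable (fun ω => 2 * t * ⟪a, g ω⟫) P :=
    ((hg.integrable one_le_two).const_inner a).const_mul _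
  have affine_integrable : Integrable (fun ω => ‖a‖ ^ 2 - 2 * t * ⟪a, g ω⟫) P :=
    (integrable_const _).sub cross_integrable
  have sq_integrable : Integrable (fun ω => t ^ 2 * ‖g ω‖ ^ 2) P :=
    (hg.integrable_norm_pow two_ne_zero).const_mul _
  simp only [norm_sub_smul_sq_real]
  rw [integral_add affine_integrable sq_integrable,
    integral_sub (integrable_const _) cross_integrable, integral_const_mul, integral_const_mul,
    integral_const, probReal_univ, one_smul]

theorem projected_sgd_one_step_contraction_general {Ω : Type*} [MeasurableSpace Ω] {P : Measure Ω}
    [IsProbabilityMeasure P] {x xstar : H} {m μ A B : ℝ} (hμ : 0 ≤ μ) {g Xp : Ω → H}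
    (hg : MemLp g 2 P)
    (hdrift : m * ‖x - xstar‖ ^ 2 ≤ ∫ ω, ⟪x - xstar, g ω⟫ ∂P)
    (hg2 : ∫ ω, ‖g ω‖ ^ 2 ∂P ≤ A + B * ‖x - xstar‖ ^ 2)
    (hXp : AEStronglyMeasurable Xp P)
    (hproj : ∀ᵐ ω ∂P, ⟪(x - μ • g ω) - Xp ω, xstar - Xp ω⟫ ≤ 0) :
    Integrable (fun ω => ‖Xp ω - xstar‖ ^ 2) P ∧
      ∫ ω, ‖Xp ω - xstar‖ ^ 2 ∂P ≤
        (1 - 2 * m * μ + B * μ ^ 2) * ‖x - xstar‖ ^ 2 + A * μ ^ 2 := by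
  have step_integrable : Integrable (fun ω => ‖(x - xstar) - μ • g ω‖ ^ 2) P :=
    ((memLp_const (x - xstar)).sub (hg.const_smul μ)).integrable_norm_pow two_ne_zero
  have dist_le_step : ∀ᵐ ω ∂P, ‖Xp ω - xstar‖ ^ 2 ≤ ‖(x - xstar) - μ • g ω‖ ^ 2 := by
    filter_upwards [hproj] with ω hω
    rw [sub_right_comm]
    exact norm_sub_sq_le_of_inner_sub_sub_nonpos hω
  have dist_integrable : Integrable (fun ω => ‖Xp ω - xstar‖ ^ 2) P := by
    refine step_integrable.mono' ((hXp.sub aestronglyMeasurable_const).norm.pow 2) ?_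
    simpa only [Real.norm_eq_abs, abs_sq] using dist_le_step
  refine ⟨dist_integrable, ?_⟩
  calc
    ∫ ω, ‖Xp ω - xstar‖ ^ 2 ∂P ≤ ∫ ω, ‖(x - xstar) - μ • g ω‖ ^ 2 ∂P :=
      integral_mono_ae dist_integrable step_integrable dist_le_step
    _ = ‖x - xstar‖ ^ 2 - 2 * μ * ∫ ω, ⟪x - xstar, g ω⟫ ∂P + μ ^ 2 * ∫ ω, ‖g ω‖ ^ 2 ∂P :=
      integral_norm_sub_smul_sq hg _ _
    _ ≤ ‖x - xstar‖ ^ 2 - 2 * μ * (m * ‖x - xstar‖ ^ 2) + μ ^ 2 * (A + B * ‖x - xstar‖ ^ 2) := by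
      gcongr
    _ = (1 - 2 * m * μ + B * μ ^ 2) * ‖x - xstar‖ ^ 2 + A * μ ^ 2 := by ring

end InnerProductSpace

/-- **one-step contraction of projected SGD.** Let `f` be `m`-strongly convex
with minimizer `x*` over the nonempty closed convex set `C` (so the variational inequality
`⟨∇f(x*), y − x*⟩ ≥ 0` holds on `C`). If `g` is an unbiased stochastic gradient at `x ∈ C`
with `E‖g‖² ≤ A + B‖x − x*‖²`, and `X⁺ = Π_C(x − μg)` (characterized by membership in `C`
and the obtuse-angle variational inequality of the metric projection), then
`E‖X⁺ − x*‖² ≤ (1 − 2mμ + Bμ²)‖x − x*‖² + Aμ²`. -/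
theorem projected_sgd_one_step_contraction
    {H : Type*} [NormedAddCommGroup H] [InnerProductSpace ℝ H] [CompleteSpace H]
    {Ω : Type*} [MeasurableSpace Ω] (P : Measure Ω) [IsProbabilityMeasure P]
    (C : Set H) (hCne : C.Nonempty) (hCcl : IsClosed C) (hCconv : Convex ℝ C)
    (f : H → ℝ) (m : ℝ) (hm : 0 < m)
    (hdiff : Differentiable ℝ f)
    (hconv : ∀ x y : H, f x + ⟪gradient f x, y - x⟫ + m / 2 * ‖y - x‖ ^ 2 ≤ f y)
    (xstar : H) (hxstarC : xstar ∈ C) (hmin : ∀ y ∈ C, f xstar ≤ f y)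
    (hVI : ∀ y ∈ C, 0 ≤ ⟪gradient f xstar, y - xstar⟫)
    (x : H) (hx : x ∈ C) (μ : ℝ) (hμ : 0 < μ)
    (g : Ω → H) (hgint : Integrable g P)
    (hg2int : Integrable (fun ω => ‖g ω‖ ^ 2) P)
    (hgmean : (∫ ω, g ω ∂P) = gradient f x)
    (A B : ℝ) (hA : 0 ≤ A) (hB : 0 ≤ B)
    (hg2 : (∫ ω, ‖g ω‖ ^ 2 ∂P) ≤ A + B * ‖x - xstar‖ ^ 2)
    (Xp : Ω → H) (hXpmeas : AEStronglyMeasurable Xp P)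
    (hXpC : ∀ ω, Xp ω ∈ C)
    (hproj : ∀ ω, ∀ y ∈ C, ⟪(x - μ • g ω) - Xp ω, y - Xp ω⟫ ≤ 0) :
    (∫ ω, ‖Xp ω - xstar‖ ^ 2 ∂P) ≤
      (1 - 2 * m * μ + B * μ ^ 2) * ‖x - xstar‖ ^ 2 + A * μ ^ 2 := by
  have hdrift : m * ‖x - xstar‖ ^ 2 ≤ ∫ ω, ⟪x - xstar, g ω⟫ ∂P := by
    rw [integral_inner hgint, hgmean]
    exact mul_norm_sub_sq_le_inner_of_variational_inequality (hconv x xstar) (hconv xstar x)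
      (hVI x hx)
  exact (projected_sgd_one_step_contraction_general hμ.le
    ((memLp_two_iff_integrable_sq_norm hgint.aestronglyMeasurable).mpr hg2int) hdrift hg2
    hXpmeas (.of_forall fun ω => hproj ω xstar hxstarC)).2
end

section
/- Let H be a real Hilbert space, C ⊆ H a nonempty closed convex set, and f : H → ℝ differentiable, convex, and m-strongly convex for some m > 0 with minimizer x* over C. Let (Ω, 𝓕, P) be a probability space, let μ > 0 be a constant step size with r := 1 − mμ + Bμ² > 0, and suppose random points x(0), x(1), …, x(K) in C satisfy E[‖x(ℓ) − x*‖²] ≤ r · E[‖x(ℓ−1) − x*‖²] − 2μ (E[f(x(ℓ−1))] − f(x*)) + Aμ² for every ℓ = 1, …, K, for constants A ≥ 0, B ≥ 0, with E[‖x(0) − x*‖²] ≤ d₀. Define the weights γ(ℓ) = r^{−ℓ} and λ(ℓ) = γ(ℓ)/Σ_{τ=1}^{K} γ(τ) for ℓ = 1, …, K, and the averaged iterate x̄ = Σ_{ℓ=1}^{K} λ(ℓ) x(ℓ−1). Then E[f(x̄)] − f(x*) ≤ d₀ / (2μ Σ_{ℓ=1}^{K} γ(ℓ)) + Aμ/2.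 -/
open MeasureTheory
open scoped RealInnerProductSpace

/-!
Multiplying the recursion `d ℓ ≤ r * d (ℓ - 1) - u ℓ + c` by `r ^ (-ℓ)` turns the contraction factor
`r` into a telescoping difference of `r ^ (-ℓ) * d ℓ`. Summing bounds the weighted average of `u` by
`d 0 / ∑ ℓ, r ^ (-ℓ) + c`. With `u ℓ = 2μ (E f(x (ℓ - 1)) - f(x*))` and `c = Aμ²` this controls the
averaged optimality gap, and Jensen's inequality moves the average inside `f`.
-/

section GeometricWeights

/-- The weight `λ(ℓ) = r^(-ℓ) / ∑_{τ=1}^K r^(-τ)` of the `ℓ`-th term, `1 ≤ ℓ ≤ K`, in a geometric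
average of `K` terms indexed from `1`. -/
noncomputable def geomWeight (r : ℝ) (K ℓ : ℕ) : ℝ :=
  (r ^ ℓ)⁻¹ / ∑ τ ∈ Finset.Icc 1 K, (r ^ τ)⁻¹

variable {r : ℝ} {K : ℕ}

lemma sum_Icc_inv_pow_pos (hr : 0 < r) (hK : 1 ≤ K) : 0 < ∑ ℓ ∈ Finset.Icc 1 K, (r ^ ℓ)⁻¹ :=
  Finset.sum_pos (fun _ _ => by positivity) (Finset.nonempty_Icc.2 hK)

lemma geomWeight_nonneg (hr : 0 ≤ r) (K ℓ : ℕ) : 0 ≤ geomWeight r K ℓ := by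
  unfold geomWeight
  positivity

lemma sum_geomWeight (hr : 0 < r) (hK : 1 ≤ K) : ∑ ℓ ∈ Finset.Icc 1 K, geomWeight r K ℓ = 1 := by
  simp only [geomWeight, ← Finset.sum_div]
  exact div_self (sum_Icc_inv_pow_pos hr hK).ne'

lemma sum_inv_pow_mul_le_of_recursion {d u : ℕ → ℝ} (hr : 0 < r)
    (hrec : ∀ ℓ ∈ Finset.Icc 1 K, d ℓ ≤ r * d (ℓ - 1) - u ℓ) :
    ∑ ℓ ∈ Finset.Icc 1 K, (r ^ ℓ)⁻¹ * u ℓ ≤ d 0 - (r ^ K)⁻¹ * d K := by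
  induction K with
  | zero => simp
  | succ n ih =>
    have hprev : ∑ ℓ ∈ Finset.Icc 1 n, (r ^ ℓ)⁻¹ * u ℓ ≤ d 0 - (r ^ n)⁻¹ * d n :=
      ih fun ℓ hℓ => hrec ℓ (Finset.Icc_subset_Icc_right n.le_succ hℓ)
    have hstep : d (n + 1) ≤ r * d n - u (n + 1) :=
      hrec (n + 1) (Finset.right_mem_Icc.2 n.succ_pos)
    have hscaled : (r ^ (n + 1))⁻¹ * u (n + 1) ≤
        (r ^ n)⁻¹ * d n - (r ^ (n + 1))⁻¹ * d (n + 1) :=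
      calc (r ^ (n + 1))⁻¹ * u (n + 1)
          ≤ (r ^ (n + 1))⁻¹ * (r * d n - d (n + 1)) := by gcongr; linarith
        _ = (r ^ n)⁻¹ * d n - (r ^ (n + 1))⁻¹ * d (n + 1) := by field_simp; ring
    rw [Finset.sum_Icc_succ_top n.succ_pos]
    linarith

lemma sum_geomWeight_mul_le_of_recursion {d u : ℕ → ℝ} {c : ℝ} (hr : 0 < r) (hK : 1 ≤ K)
    (hd : 0 ≤ d K) (hrec : ∀ ℓ ∈ Finset.Icc 1 K, d ℓ ≤ r * d (ℓ - 1) - u ℓ + c) :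
    ∑ ℓ ∈ Finset.Icc 1 K, geomWeight r K ℓ * u ℓ ≤
      d 0 / ∑ ℓ ∈ Finset.Icc 1 K, (r ^ ℓ)⁻¹ + c := by
  have hS := sum_Icc_inv_pow_pos hr hK
  have hd' : 0 ≤ (r ^ K)⁻¹ * d K := by positivity
  have htel : ∑ ℓ ∈ Finset.Icc 1 K, (r ^ ℓ)⁻¹ * (u ℓ - c) ≤ d 0 - (r ^ K)⁻¹ * d K :=
    sum_inv_pow_mul_le_of_recursion hr fun ℓ hℓ => by linarith [hrec ℓ hℓ]
  simp only [mul_sub, Finset.sum_sub_distrib, ← Finset.sum_mul] at htel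
  simp only [geomWeight, div_mul_eq_mul_div, ← Finset.sum_div]
  rw [div_add' _ _ _ hS.ne']
  gcongr
  linarith

lemma sum_geomWeight_mul_sub_le_of_recursion {d g : ℕ → ℝ} {μ A v : ℝ} (hr : 0 < r) (hμ : 0 < μ)
    (hK : 1 ≤ K) (hd : 0 ≤ d K)
    (hrec : ∀ ℓ ∈ Finset.Icc 1 K, d ℓ ≤ r * d (ℓ - 1) - 2 * μ * (g ℓ - v) + A * μ ^ 2) :
    ∑ ℓ ∈ Finset.Icc 1 K, geomWeight r K ℓ * g ℓ - v ≤
      d 0 / (2 * μ * ∑ ℓ ∈ Finset.Icc 1 K, (r ^ ℓ)⁻¹) + A * μ / 2 := by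
  have hgap : ∑ ℓ ∈ Finset.Icc 1 K, geomWeight r K ℓ * (2 * μ * (g ℓ - v)) =
      2 * μ * (∑ ℓ ∈ Finset.Icc 1 K, geomWeight r K ℓ * g ℓ - v) := by
    simp only [mul_left_comm _ (2 * μ), ← Finset.mul_sum, mul_sub, Finset.sum_sub_distrib,
      ← Finset.sum_mul, sum_geomWeight hr hK, one_mul]
  have havg := sum_geomWeight_mul_le_of_recursion hr hK hd hrec
  rw [hgap, ← le_div_iff₀' (by positivity)] at havg
  calc ∑ ℓ ∈ Finset.Icc 1 K, geomWeight r K ℓ * g ℓ - v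
      ≤ (d 0 / ∑ ℓ ∈ Finset.Icc 1 K, (r ^ ℓ)⁻¹ + A * μ ^ 2) / (2 * μ) := havg
    _ = d 0 / (2 * μ * ∑ ℓ ∈ Finset.Icc 1 K, (r ^ ℓ)⁻¹) + A * μ / 2 := by field_simp

end GeometricWeights

section Jensen

variable {E Ω ι : Type*} [AddCommGroup E] [Module ℝ E] [MeasurableSpace Ω] {P : Measure Ω}
  {C : Set E} {f : E → ℝ} {s : Finset ι} {w : ι → ℝ} {x : ι → Ω → E}

lemma ae_map_sum_smul_le (hf : ConvexOn ℝ C f) (hw₀ : ∀ i ∈ s, 0 ≤ w i) (hw₁ : ∑ i ∈ s, w i = 1)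
    (hxC : ∀ i ∈ s, ∀ᵐ ω ∂P, x i ω ∈ C) :
    ∀ᵐ ω ∂P, f (∑ i ∈ s, w i • x i ω) ≤ ∑ i ∈ s, w i * f (x i ω) := by
  filter_upwards [(Finset.eventually_all s).2 hxC] with ω hω
  exact hf.map_sum_le hw₀ hw₁ hω

variable [TopologicalSpace E] [ContinuousAdd E] [ContinuousConstSMul ℝ E] [IsFiniteMeasure P]

lemma integrable_map_sum_smul (hf : ConvexOn ℝ C f) (hcont : Continuous f)
    (hbdd : BddBelow (f '' C)) (hw₀ : ∀ i ∈ s, 0 ≤ w i) (hw₁ : ∑ i ∈ s, w i = 1)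
    (hxC : ∀ i ∈ s, ∀ᵐ ω ∂P, x i ω ∈ C) (hx : ∀ i ∈ s, AEStronglyMeasurable (x i) P)
    (hfx : ∀ i ∈ s, Integrable (fun ω => f (x i ω)) P) :
    Integrable (fun ω => f (∑ i ∈ s, w i • x i ω)) P := by
  obtain ⟨b, hb⟩ := hbdd
  have hmeas : AEStronglyMeasurable (fun ω => f (∑ i ∈ s, w i • x i ω)) P :=
    hcont.comp_aestronglyMeasurable <|
      Finset.aestronglyMeasurable_fun_sum s fun i hi => (hx i hi).const_smul (w i)
  have hlower : ∀ᵐ ω ∂P, b ≤ f (∑ i ∈ s, w i • x i ω) := by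
    filter_upwards [(Finset.eventually_all s).2 hxC] with ω hω
    exact hb (Set.mem_image_of_mem f (hf.1.sum_mem hw₀ hw₁ hω))
  exact integrable_of_le_of_le hmeas hlower (ae_map_sum_smul_le hf hw₀ hw₁ hxC)
    (integrable_const b) (integrable_finsetSum s fun i hi => (hfx i hi).const_mul (w i))

lemma integral_map_sum_smul_le (hf : ConvexOn ℝ C f) (hcont : Continuous f)
    (hbdd : BddBelow (f '' C)) (hw₀ : ∀ i ∈ s, 0 ≤ w i) (hw₁ : ∑ i ∈ s, w i = 1)
    (hxC : ∀ i ∈ s, ∀ᵐ ω ∂P, x i ω ∈ C) (hx : ∀ i ∈ s, AEStronglyMeasurable (x i) P)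
    (hfx : ∀ i ∈ s, Integrable (fun ω => f (x i ω)) P) :
    ∫ ω, f (∑ i ∈ s, w i • x i ω) ∂P ≤ ∑ i ∈ s, w i * ∫ ω, f (x i ω) ∂P := by
  have hterm : ∀ i ∈ s, Integrable (fun ω => w i * f (x i ω)) P :=
    fun i hi => (hfx i hi).const_mul (w i)
  calc ∫ ω, f (∑ i ∈ s, w i • x i ω) ∂P
      ≤ ∫ ω, ∑ i ∈ s, w i * f (x i ω) ∂P :=
        integral_mono_ae (integrable_map_sum_smul hf hcont hbdd hw₀ hw₁ hxC hx hfx)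
          (integrable_finsetSum s hterm) (ae_map_sum_smul_le hf hw₀ hw₁ hxC)
    _ = ∑ i ∈ s, w i * ∫ ω, f (x i ω) ∂P := by
        rw [integral_finsetSum s hterm]
        simp only [integral_const_mul]

end Jensen

/-- `d ℓ` plays the role of `E‖x(ℓ) - x*‖²` and `v` that of `f(x*)`. -/
theorem sgd_constant_step_averaging_bound_general
    {E Ω : Type*} [AddCommGroup E] [Module ℝ E] [TopologicalSpace E] [ContinuousAdd E]
    [ContinuousConstSMul ℝ E] [MeasurableSpace Ω] {P : Measure Ω} [IsFiniteMeasure P]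
    {C : Set E} {f : E → ℝ} (hf : ConvexOn ℝ C f) (hcont : Continuous f)
    (hbdd : BddBelow (f '' C)) {μ A r v d₀ : ℝ} (hμ : 0 < μ) (hr : 0 < r) {K : ℕ} (hK : 1 ≤ K)
    {x : ℕ → Ω → E} (hxC : ∀ ℓ < K, ∀ᵐ ω ∂P, x ℓ ω ∈ C)
    (hx : ∀ ℓ < K, AEStronglyMeasurable (x ℓ) P)
    (hfx : ∀ ℓ < K, Integrable (fun ω => f (x ℓ ω)) P)
    {d : ℕ → ℝ} (hd₀ : d 0 ≤ d₀) (hdK : 0 ≤ d K)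
    (hrec : ∀ ℓ ∈ Finset.Icc 1 K,
      d ℓ ≤ r * d (ℓ - 1) - 2 * μ * ((∫ ω, f (x (ℓ - 1) ω) ∂P) - v) + A * μ ^ 2) :
    (∫ ω, f (∑ ℓ ∈ Finset.Icc 1 K, geomWeight r K ℓ • x (ℓ - 1) ω) ∂P) - v ≤
      d₀ / (2 * μ * ∑ ℓ ∈ Finset.Icc 1 K, (r ^ ℓ)⁻¹) + A * μ / 2 := by
  have hlt : ∀ ℓ ∈ Finset.Icc 1 K, ℓ - 1 < K := fun ℓ hℓ => by
    rw [Finset.mem_Icc] at hℓ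
    omega
  have hjensen : ∫ ω, f (∑ ℓ ∈ Finset.Icc 1 K, geomWeight r K ℓ • x (ℓ - 1) ω) ∂P ≤
      ∑ ℓ ∈ Finset.Icc 1 K, geomWeight r K ℓ * ∫ ω, f (x (ℓ - 1) ω) ∂P :=
    integral_map_sum_smul_le hf hcont hbdd (fun ℓ _ => geomWeight_nonneg hr.le K ℓ)
      (sum_geomWeight hr hK) (fun ℓ hℓ => hxC _ (hlt ℓ hℓ)) (fun ℓ hℓ => hx _ (hlt ℓ hℓ))
      fun ℓ hℓ => hfx _ (hlt ℓ hℓ)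
  calc (∫ ω, f (∑ ℓ ∈ Finset.Icc 1 K, geomWeight r K ℓ • x (ℓ - 1) ω) ∂P) - v
      ≤ ∑ ℓ ∈ Finset.Icc 1 K, geomWeight r K ℓ * (∫ ω, f (x (ℓ - 1) ω) ∂P) - v := by gcongr
    _ ≤ d 0 / (2 * μ * ∑ ℓ ∈ Finset.Icc 1 K, (r ^ ℓ)⁻¹) + A * μ / 2 :=
        sum_geomWeight_mul_sub_le_of_recursion hr hμ hK hdK hrec
    _ ≤ d₀ / (2 * μ * ∑ ℓ ∈ Finset.Icc 1 K, (r ^ ℓ)⁻¹) + A * μ / 2 := by gcongr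

/-- **SGD with constant step size and geometric averaging, Lemma A.3.**
Under the per-step expected inequality
`E‖x(ℓ) − x*‖² ≤ r E‖x(ℓ−1) − x*‖² − 2μ (E f(x(ℓ−1)) − f(x*)) + Aμ²` with
`r = 1 − mμ + Bμ² > 0` and `E‖x(0) − x*‖² ≤ d₀`, the geometrically averaged iterate
`x̄ = Σ_{ℓ=1}^{K} λ(ℓ) x(ℓ−1)` (with `γ(ℓ) = r^{−ℓ}` and `λ(ℓ) = γ(ℓ)/Σ_τ γ(τ)`) satisfies
`E f(x̄) − f(x*) ≤ d₀ / (2μ Σ_ℓ γ(ℓ)) + Aμ/2`. -/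
theorem sgd_constant_step_averaging_bound
    {H : Type*} [NormedAddCommGroup H] [InnerProductSpace ℝ H] [CompleteSpace H]
    {Ω : Type*} [MeasurableSpace Ω] (P : Measure Ω) [IsProbabilityMeasure P]
    (C : Set H) (hCne : C.Nonempty) (hCcl : IsClosed C) (hCconv : Convex ℝ C)
    (f : H → ℝ) (hdiff : Differentiable ℝ f) (hfconv : ConvexOn ℝ Set.univ f)
    (m : ℝ) (hm : 0 < m)
    (hsconv : ∀ x y : H, f x + ⟪gradient f x, y - x⟫ + m / 2 * ‖y - x‖ ^ 2 ≤ f y)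
    (xstar : H) (hxstarC : xstar ∈ C) (hmin : ∀ y ∈ C, f xstar ≤ f y)
    (μ A B : ℝ) (hμ : 0 < μ) (hA : 0 ≤ A) (hB : 0 ≤ B)
    (r : ℝ) (hr : r = 1 - m * μ + B * μ ^ 2) (hrpos : 0 < r)
    (K : ℕ) (hK : 1 ≤ K)
    (x : ℕ → Ω → H)
    (hxC : ∀ ℓ ω, x ℓ ω ∈ C)
    (hxmeas : ∀ ℓ, AEStronglyMeasurable (x ℓ) P)
    (hintf : ∀ ℓ, Integrable (fun ω => f (x ℓ ω)) P)
    (hintd : ∀ ℓ, Integrable (fun ω => ‖x ℓ ω - xstar‖ ^ 2) P)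
    (d₀ : ℝ) (hd0 : (∫ ω, ‖x 0 ω - xstar‖ ^ 2 ∂P) ≤ d₀)
    (hrec : ∀ ℓ ∈ Finset.Icc 1 K,
      (∫ ω, ‖x ℓ ω - xstar‖ ^ 2 ∂P) ≤
        r * (∫ ω, ‖x (ℓ - 1) ω - xstar‖ ^ 2 ∂P)
          - 2 * μ * ((∫ ω, f (x (ℓ - 1) ω) ∂P) - f xstar) + A * μ ^ 2) :
    (∫ ω, f (∑ ℓ ∈ Finset.Icc 1 K,
        ((r ^ ℓ)⁻¹ / ∑ τ ∈ Finset.Icc 1 K, (r ^ τ)⁻¹) • x (ℓ - 1) ω) ∂P) - f xstar ≤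
      d₀ / (2 * μ * ∑ ℓ ∈ Finset.Icc 1 K, (r ^ ℓ)⁻¹) + A * μ / 2 := by
  have hbdd : BddBelow (f '' C) := ⟨f xstar, Set.forall_mem_image.2 hmin⟩
  exact sgd_constant_step_averaging_bound_general (hfconv.subset C.subset_univ hCconv)
    hdiff.continuous hbdd hμ hrpos hK (fun ℓ _ => .of_forall (hxC ℓ)) (fun ℓ _ => hxmeas ℓ)
    (fun ℓ _ => hintf ℓ) hd0 (integral_nonneg fun _ => by positivity) hrec
end

section
/- Let (Ω, 𝓕, P) be a probability space, let 𝒫 be a partially ordered set, and for each i ≥ 1 let φᵢ : 𝒫 → ℝ be monotone nondecreasing with 0 ≤ φᵢ(ψ) ≤ D for all ψ ∈ 𝒫 and a constant D. Fix ψ* ∈ 𝒫 and a constant φ* ≥ 0 with E[φᵢ(ψ*)] ≥ φ* for every i, where the arguments ψᵢ : Ω → 𝒫 are random and each φᵢ(ψᵢ) and φᵢ(ψ*) is measurable and integrable. Suppose there is an almost surely finite random index Ñ such that ψₙ ≥ ψ* for all n ≥ Ñ almost surely. Then liminf_{n→∞} E[(1/n) Σ_{i=1}^{n} φᵢ(ψᵢ)]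 ≥ φ*. -/
open MeasureTheory Filter

/-!
Put `X i = φᵢ(ψᵢ)` and `Y i = φᵢ(ψ*)`. Almost surely `Y i ≤ X i` for all large `i`, so the excess
`(Y i - X i)⁺` vanishes eventually; being dominated, its expectation tends to `0`. Since
`E[X i] ≥ E[Y i] - E[(Y i - X i)⁺]`, the expectations `E[X i]` are eventually above every `b < φ*`,
and Cesàro averaging preserves such lower bounds.
-/

section Cesaro

variable {u : ℕ → ℝ} {a b c : ℝ}

theorem eventually_lt_cesaro (hu : ∀ᶠ i in atTop, a ≤ u i) (hba : b < a) :
    ∀ᶠ n : ℕ in atTop, b < (n : ℝ)⁻¹ * ∑ i ∈ Finset.range n, u i := by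
  have tendsto_min : Tendsto (fun i => min (u i) a) atTop (nhds a) :=
    tendsto_const_nhds.congr' (hu.mono fun _ hi => (min_eq_right hi).symm)
  filter_upwards [tendsto_min.cesaro.eventually_const_lt hba] with n hn
  refine hn.trans_le ?_
  gcongr
  exact min_le_left _ _

theorem eventually_cesaro_lt (hu : ∀ᶠ i in atTop, u i ≤ a) (hab : a < b) :
    ∀ᶠ n : ℕ in atTop, (n : ℝ)⁻¹ * ∑ i ∈ Finset.range n, u i < b := by
  have neg_lt_cesaro_neg :=
    eventually_lt_cesaro (hu.mono fun _ hi => neg_le_neg hi) (neg_lt_neg hab)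
  simpa only [Finset.sum_neg_distrib, mul_neg, neg_lt_neg_iff] using neg_lt_cesaro_neg

theorem le_liminf_cesaro (hbdd : IsBoundedUnder (· ≤ ·) atTop u)
    (hu : ∀ b < c, ∀ᶠ i in atTop, b ≤ u i) :
    c ≤ liminf (fun n : ℕ => (n : ℝ)⁻¹ * ∑ i ∈ Finset.range n, u i) atTop := by
  have lt_cesaro : ∀ b < c, ∀ᶠ n : ℕ in atTop, b < (n : ℝ)⁻¹ * ∑ i ∈ Finset.range n, u i := by
    intro b hb
    obtain ⟨a, hba, hac⟩ := exists_between hb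
    exact eventually_lt_cesaro (hu a hac) hba
  obtain ⟨B, hB⟩ := hbdd.eventually_le
  have cesaro_bddAbove := isBoundedUnder_of_eventually_le
    ((eventually_cesaro_lt hB (lt_add_one B)).mono fun _ => le_of_lt)
  have cesaro_bddBelow := isBoundedUnder_of_eventually_ge
    ((lt_cesaro (c - 1) (sub_one_lt c)).mono fun _ => le_of_lt)
  exact (le_liminf_iff cesaro_bddAbove.isCoboundedUnder_ge cesaro_bddBelow).2 lt_cesaro

end Cesaro

section Integral

variable {Ω : Type*} [MeasurableSpace Ω] {μ : Measure Ω}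

theorem tendsto_integral_posPart_zero {ι : Type*} {l : Filter ι} [l.IsCountablyGenerated]
    {Z : ι → Ω → ℝ} {g : Ω → ℝ} (hZ : ∀ᶠ i in l, AEStronglyMeasurable (Z i) μ)
    (hg : Integrable g μ) (hZg : ∀ᶠ i in l, ∀ᵐ ω ∂μ, Z i ω ≤ g ω)
    (hZ_nonpos : ∀ᵐ ω ∂μ, ∀ᶠ i in l, Z i ω ≤ 0) :
    Tendsto (fun i => ∫ ω, max (Z i ω) 0 ∂μ) l (nhds 0) := by
  suffices Tendsto (fun i => ∫ ω, max (Z i ω) 0 ∂μ) l (nhds (∫ _, 0 ∂μ)) by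
    rwa [integral_zero] at this
  refine tendsto_integral_filter_of_dominated_convergence (fun ω => max (g ω) 0)
    ?_ ?_ hg.pos_part ?_
  · exact hZ.mono fun _ hi => hi.sup aestronglyMeasurable_const
  · filter_upwards [hZg] with i hi
    filter_upwards [hi] with ω hω
    rw [Real.norm_of_nonneg (le_max_right _ _)]
    exact max_le_max_right 0 hω
  · filter_upwards [hZ_nonpos] with ω hω
    exact tendsto_const_nhds.congr' (hω.mono fun _ hi => (max_eq_right hi).symm)

theorem integral_sub_integral_posPart_le {f g : Ω → ℝ} (hf : Integrable f μ)
    (hg : Integrable g μ) :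
    ∫ ω, f ω ∂μ - ∫ ω, max (f ω - g ω) 0 ∂μ ≤ ∫ ω, g ω ∂μ := by
  rw [sub_le_comm, ← integral_sub hf hg]
  exact integral_mono (hf.sub hg) (hf.sub hg).pos_part fun ω => le_max_left _ _

theorem eventually_le_integral_of_ae_eventually_le {ι : Type*} {l : Filter ι}
    [l.IsCountablyGenerated] {X Y : ι → Ω → ℝ} {g : Ω → ℝ} {b c : ℝ}
    (hX : ∀ i, Integrable (X i) μ) (hY : ∀ i, Integrable (Y i) μ) (hg : Integrable g μ)
    (hYXg : ∀ᶠ i in l, ∀ᵐ ω ∂μ, Y i ω - X i ω ≤ g ω)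
    (hYX : ∀ᵐ ω ∂μ, ∀ᶠ i in l, Y i ω ≤ X i ω)
    (hc : ∀ᶠ i in l, c ≤ ∫ ω, Y i ω ∂μ) (hbc : b < c) :
    ∀ᶠ i in l, b ≤ ∫ ω, X i ω ∂μ := by
  have tendsto_excess : Tendsto (fun i => ∫ ω, max (Y i ω - X i ω) 0 ∂μ) l (nhds 0) :=
    tendsto_integral_posPart_zero
      (.of_forall fun i => ((hY i).sub (hX i)).aestronglyMeasurable) hg hYXg
      (hYX.mono fun _ hω => hω.mono fun _ => sub_nonpos_of_le)
  filter_upwards [hc, tendsto_excess.eventually_lt_const (sub_pos.2 hbc)] with i hci hi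
  linarith [integral_sub_integral_posPart_le (hY i) (hX i)]

theorem integral_average_Icc_one {X : ℕ → Ω → ℝ} (hX : ∀ i, Integrable (X i) μ) (n : ℕ) :
    ∫ ω, (1 / (n : ℝ)) * ∑ i ∈ Finset.Icc 1 n, X i ω ∂μ =
      (n : ℝ)⁻¹ * ∑ i ∈ Finset.range n, ∫ ω, X (i + 1) ω ∂μ := by
  rw [integral_const_mul, integral_finsetSum _ fun i _ => hX i, one_div, Finset.range_eq_Ico,
    Finset.sum_Ico_add' (fun i => ∫ ω, X i ω ∂μ), zero_add, Finset.Ico_add_one_right_eq_Icc]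

theorem parameter_estimation_liminf_bound_general {X Y : ℕ → Ω → ℝ} {g : Ω → ℝ} {c : ℝ}
    (hX : ∀ i, Integrable (X i) μ) (hY : ∀ i, Integrable (Y i) μ) (hg : Integrable g μ)
    (hYXg : ∀ᶠ i in atTop, ∀ᵐ ω ∂μ, Y i ω - X i ω ≤ g ω)
    (hYX : ∀ᵐ ω ∂μ, ∀ᶠ i in atTop, Y i ω ≤ X i ω)
    (hbdd : IsBoundedUnder (· ≤ ·) atTop fun i => ∫ ω, X i ω ∂μ)
    (hc : ∀ᶠ i in atTop, c ≤ ∫ ω, Y i ω ∂μ) :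
    c ≤ liminf (fun n : ℕ => ∫ ω, (1 / (n : ℝ)) * ∑ i ∈ Finset.Icc 1 n, X i ω ∂μ) atTop := by
  simp only [integral_average_Icc_one hX]
  have tendsto_succ : Tendsto (· + 1) atTop (atTop : Filter ℕ) := tendsto_add_atTop_nat 1
  refine le_liminf_cesaro (tendsto_succ.isBoundedUnder_comp hbdd) fun b hbc => ?_
  exact tendsto_succ.eventually
    (eventually_le_integral_of_ae_eventually_le hX hY hg hYXg hYX hc hbc)

end Integral

/-- **parameter-estimation lemma, Section 3.4.** Estimates `φᵢ` taking values
in `[0, D]`, monotone in a partially ordered parameter, upward biased at the true auxiliary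
parameter `ψ*` (`E[φᵢ(ψ*)] ≥ φ*`), and evaluated at random auxiliary parameters `ψᵢ` that
eventually dominate `ψ*` almost surely, satisfy
`liminf_{n→∞} E[(1/n) Σ_{i=1}^{n} φᵢ(ψᵢ)] ≥ φ*`. -/
theorem parameter_estimation_liminf_bound
    {Ω : Type*} [MeasurableSpace Ω] (P : Measure Ω) [IsProbabilityMeasure P]
    {Θ : Type*} [PartialOrder Θ]
    (φ : ℕ → Ω → Θ → ℝ) (D : ℝ)
    (hmono : ∀ i ω, Monotone (φ i ω))
    (hbd : ∀ i ω ψ', 0 ≤ φ i ω ψ' ∧ φ i ω ψ' ≤ D)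
    (ψstar : Θ) (φstar : ℝ) (hφstar : 0 ≤ φstar)
    (ψ : ℕ → Ω → Θ)
    (hint1 : ∀ i, Integrable (fun ω => φ i ω (ψ i ω)) P)
    (hint2 : ∀ i, Integrable (fun ω => φ i ω ψstar) P)
    (hbias : ∀ i, φstar ≤ ∫ ω, φ i ω ψstar ∂P)
    (hdom : ∀ᵐ ω ∂P, ∃ N : ℕ, ∀ n : ℕ, N ≤ n → ψstar ≤ ψ n ω) :
    φstar ≤
      liminf (fun n : ℕ =>
        ∫ ω, (1 / (n : ℝ)) * ∑ i ∈ Finset.Icc 1 n, φ i ω (ψ i ω) ∂P) atTop := by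
  refine parameter_estimation_liminf_bound_general hint1 hint2 (integrable_const D)
    (.of_forall fun i => .of_forall fun ω => ?_) ?_ (isBoundedUnder_of ⟨D, fun i => ?_⟩)
    (.of_forall hbias)
  · linarith [(hbd i ω ψstar).2, (hbd i ω (ψ i ω)).1]
  · filter_upwards [hdom] with ω ⟨N, hN⟩
    exact eventually_atTop.2 ⟨N, fun n hn => hmono n ω (hN n hn)⟩
  · simpa using integral_mono (hint1 i) (integrable_const D) fun ω => (hbd i ω (ψ i ω)).2
end
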